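/- arXiv:q-alg/9708004 — 5 statements merged into one kernel-verified Lean document; each statement's English description precedes it below -/
import Mathlib

section
/- Let (λ, ρ) be a commuting pair of left and right coactions of a finite-dimensional Hopf algebra G on an algebra M, with dual commuting left and right Ĝ-actions ▷ and ◁. Then the vector space M ⊗ Ĝ equipped with the product (m ⋈ φ)(n ⋈ ψ) := m(φ₍₁₎ ▷ n ◁ Ŝ⁻¹(φ₍₃₎)) ⋈ φ₍₂₎ψ is an associative unital algebra with unit 1_M ⋈ 1̂, containing M ≅ M ⋈ 1̂ and Ĝ ≅ 1_M ⋈ Ĝ as unital subalgebras. -/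
open TensorProduct

/-- The Sweedler shuffle `φ ↦ (φ₍₁₎ ⊗ φ₍₃₎) ⊗ φ₍₂₎`. -/
noncomputable def sweedlerShuffle (H : Type*) [Ring H] [HopfAlgebra ℂ H] :
    H →ₗ[ℂ] (H ⊗[ℂ] H) ⊗[ℂ] H :=
  (TensorProduct.assoc ℂ H H H).symm.toLinearMap ∘ₗ
    TensorProduct.map LinearMap.id (TensorProduct.comm ℂ H H).toLinearMap ∘ₗ
    TensorProduct.map LinearMap.id (Coalgebra.comul (R := ℂ)) ∘ₗ
    Coalgebra.comul (R := ℂ)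

namespace DiagonalCrossedProduct

open Coalgebra HopfAlgebra WithConv

section Coassociativity

variable {C : Type*} [AddCommGroup C] [Module ℂ C] [Coalgebra ℂ C]

theorem map_comul_comul_comp_comul :
    TensorProduct.map (comul (R := ℂ) (A := C)) comul ∘ₗ comul =
      (TensorProduct.assoc ℂ C C (C ⊗[ℂ] C)).symm.toLinearMap ∘ₗ
        TensorProduct.map LinearMap.id
          ((TensorProduct.assoc ℂ C C C).toLinearMap ∘ₗ
            TensorProduct.map comul LinearMap.id ∘ₗ comul) ∘ₗ comul := by
  simp only [coassoc_simps]

/-- The reassociation `a ⊗ ((b ⊗ (c ⊗ d)) ⊗ e) ↦ (a ⊗ b) ⊗ (c ⊗ (d ⊗ e))`. -/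
noncomputable def fiveAssoc (C : Type*) [AddCommGroup C] [Module ℂ C] :
    C ⊗[ℂ] ((C ⊗[ℂ] (C ⊗[ℂ] C)) ⊗[ℂ] C) →ₗ[ℂ] (C ⊗[ℂ] C) ⊗[ℂ] (C ⊗[ℂ] (C ⊗[ℂ] C)) :=
  (TensorProduct.assoc ℂ C C (C ⊗[ℂ] (C ⊗[ℂ] C))).symm.toLinearMap ∘ₗ
    TensorProduct.map LinearMap.id
      (TensorProduct.map LinearMap.id (TensorProduct.assoc ℂ C C C).toLinearMap ∘ₗ
        (TensorProduct.assoc ℂ C (C ⊗[ℂ] C) C).toLinearMap)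

@[simp]
theorem fiveAssoc_tmul {C : Type*} [AddCommGroup C] [Module ℂ C] (a b c d e : C) :
    fiveAssoc C (a ⊗ₜ[ℂ] ((b ⊗ₜ[ℂ] (c ⊗ₜ[ℂ] d)) ⊗ₜ[ℂ] e)) =
      (a ⊗ₜ[ℂ] b) ⊗ₜ[ℂ] (c ⊗ₜ[ℂ] (d ⊗ₜ[ℂ] e)) := by
  simp [fiveAssoc]

/-- The iterated comultiplication `φ ↦ φ₍₁₎ ⊗ (φ₍₂₎ ⊗ φ₍₃₎)`. -/
noncomputable def comulThree (C : Type*) [AddCommGroup C] [Module ℂ C] [Coalgebra ℂ C] :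
    C →ₗ[ℂ] C ⊗[ℂ] (C ⊗[ℂ] C) :=
  TensorProduct.map LinearMap.id comul ∘ₗ comul

theorem map_comul_comulThree :
    TensorProduct.map (comul (R := ℂ) (A := C)) (TensorProduct.map LinearMap.id comul) ∘ₗ
        comulThree C =
      fiveAssoc C ∘ₗ
        TensorProduct.map LinearMap.id (TensorProduct.map (comulThree C) LinearMap.id) ∘ₗ
          comulThree C := by
  simp only [comulThree, fiveAssoc, coassoc_simps]

theorem lid_comp_map_counit_comp_comul :
    (TensorProduct.lid ℂ C).toLinearMap ∘ₗ
      TensorProduct.map (counit (R := ℂ) (A := C)) LinearMap.id ∘ₗ comul = LinearMap.id := by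
  ext x
  exact (congrArg (TensorProduct.lid ℂ C) (rTensor_counit_comul x)).trans (by simp)

theorem rid_comp_map_counit_comp_comul :
    (TensorProduct.rid ℂ C).toLinearMap ∘ₗ
      TensorProduct.map LinearMap.id (counit (R := ℂ) (A := C)) ∘ₗ comul = LinearMap.id := by
  ext x
  exact (congrArg (TensorProduct.rid ℂ C) (lTensor_counit_comul x)).trans (by simp)

theorem counit_comulThree (a : C) :
    TensorProduct.lid ℂ C (TensorProduct.map (counit (R := ℂ) (A := C))
      ((TensorProduct.rid ℂ C).toLinearMap ∘ₗ
        TensorProduct.map LinearMap.id (counit (R := ℂ) (A := C))) (comulThree C a)) = a := by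
  rw [comulThree, LinearMap.comp_apply, ← LinearMap.comp_apply (TensorProduct.map counit _),
    ← TensorProduct.map_comp, LinearMap.comp_assoc, rid_comp_map_counit_comp_comul]
  exact LinearMap.congr_fun lid_comp_map_counit_comp_comul a

end Coassociativity

section Antipode

variable {H : Type*} [Ring H] [HopfAlgebra ℂ H]

theorem comul_antipode (a : H) :
    comul (R := ℂ) (antipode ℂ a) =
      TensorProduct.map (antipode ℂ) (antipode ℂ) (TensorProduct.comm ℂ H H (comul a)) := by
  have key : toConv (TensorProduct.map (antipode ℂ) (antipode ℂ) ∘ₗ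
      (TensorProduct.comm ℂ H H).toLinearMap ∘ₗ comul) * toConv (comul (R := ℂ) (A := H)) = 1 := by
    apply WithConv.ext
    set T : (H ⊗[ℂ] H) ⊗[ℂ] (H ⊗[ℂ] H) →ₗ[ℂ] H ⊗[ℂ] H :=
      LinearMap.mul' ℂ (H ⊗[ℂ] H) ∘ₗ TensorProduct.map
        (TensorProduct.map (antipode ℂ) (antipode ℂ) ∘ₗ (TensorProduct.comm ℂ H H).toLinearMap)
        LinearMap.id with hT
    set U : H ⊗[ℂ] H →ₗ[ℂ] H ⊗[ℂ] H := TensorProduct.mk ℂ H H 1 ∘ₗ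
      LinearMap.mul' ℂ H ∘ₗ TensorProduct.map (antipode ℂ) LinearMap.id with hU
    have h1 : T ∘ₗ (TensorProduct.assoc ℂ H H (H ⊗[ℂ] H)).symm.toLinearMap ∘ₗ
        TensorProduct.map LinearMap.id ((TensorProduct.assoc ℂ H H H).toLinearMap ∘ₗ
            TensorProduct.map comul LinearMap.id) =
        U ∘ₗ TensorProduct.map LinearMap.id (TensorProduct.lid ℂ H ∘ₗ
          TensorProduct.map counit LinearMap.id) := by
      ext x y z
      have h2 : ∀ w : H ⊗[ℂ] H, T ((TensorProduct.assoc ℂ H H (H ⊗[ℂ] H)).symm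
          (x ⊗ₜ (TensorProduct.assoc ℂ H H H (w ⊗ₜ z)))) =
          LinearMap.mul' ℂ H ((antipode ℂ).rTensor H w) ⊗ₜ (antipode ℂ x * z) := by
        intro w
        induction w with
        | zero => simp
        | add a b ha hb =>
          simp only [map_add, TensorProduct.add_tmul, TensorProduct.tmul_add, ha, hb]
        | tmul a b => simp [hT]
      simpa [hU, Algebra.algebraMap_eq_smul_one, TensorProduct.smul_tmul] using h2 (comul y)
    calc _ = T ∘ₗ TensorProduct.map comul comul ∘ₗ comul := by
            simp only [LinearMap.convMul_def, hT, ofConv_toConv, LinearMap.comp_assoc,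
              LinearMap.id_comp, CoassocSimps.TensorProduct.map_comp_assoc]
      _ = (T ∘ₗ (TensorProduct.assoc ℂ H H (H ⊗[ℂ] H)).symm.toLinearMap ∘ₗ
            TensorProduct.map LinearMap.id ((TensorProduct.assoc ℂ H H H).toLinearMap ∘ₗ
              TensorProduct.map comul LinearMap.id)) ∘ₗ
            TensorProduct.map LinearMap.id comul ∘ₗ comul := by
        rw [map_comul_comul_comp_comul]
        simp only [LinearMap.comp_assoc, CoassocSimps.TensorProduct.map_comp_assoc,
          LinearMap.id_comp]
      _ = U ∘ₗ comul := by
        rw [h1, LinearMap.comp_assoc, CoassocSimps.TensorProduct.map_comp_assoc,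
          LinearMap.comp_assoc (comul (R := ℂ) (A := H)), lid_comp_map_counit_comp_comul,
          LinearMap.id_comp, TensorProduct.map_id, LinearMap.id_comp]
      _ = _ := by
        ext x
        simpa [hU, LinearMap.rTensor, Algebra.TensorProduct.algebraMap_apply,
          Algebra.algebraMap_eq_smul_one, TensorProduct.smul_tmul, Algebra.TensorProduct.one_def]
          using congrArg ((1 : H) ⊗ₜ[ℂ] ·) (mul_antipode_rTensor_comul_apply (R := ℂ) x)
  have := left_inv_eq_right_inv key LinearMap.comul_right_inv
  exact (LinearMap.congr_fun (congrArg WithConv.ofConv this) a).symm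

variable {Si : H →ₗ[ℂ] H}

theorem inverse_antipode_one (hSi1 : ∀ x : H, Si (antipode ℂ x) = x) : Si 1 = 1 := by
  simpa using hSi1 1

theorem inverse_antipode_mul (hSi1 : ∀ x : H, Si (antipode ℂ x) = x)
    (hSi2 : ∀ x : H, antipode ℂ (Si x) = x) (a b : H) : Si (a * b) = Si b * Si a := by
  rw [← hSi1 (Si b * Si a), antipode_mul_antidistrib, hSi2, hSi2]

theorem counit_inverse_antipode (hSi2 : ∀ x : H, antipode ℂ (Si x) = x) (a : H) :
    counit (R := ℂ) (Si a) = counit a := by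
  rw [← counit_antipode (R := ℂ) (Si a), hSi2]

theorem comul_inverse_antipode (hSi1 : ∀ x : H, Si (antipode ℂ x) = x)
    (hSi2 : ∀ x : H, antipode ℂ (Si x) = x) (a : H) :
    comul (R := ℂ) (Si a) =
      TensorProduct.map Si Si (TensorProduct.comm ℂ H H (comul a)) := by
  have hid : Si ∘ₗ antipode ℂ = LinearMap.id := LinearMap.ext hSi1
  have h := comul_antipode (Si a)
  rw [hSi2] at h
  rw [h, ← TensorProduct.map_comm, ← LinearMap.comp_apply (TensorProduct.map Si Si),
    ← TensorProduct.map_comp, hid, TensorProduct.map_id, LinearMap.id_apply]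
  simp

end Antipode

section Shuffle

variable {H : Type*} [Ring H] [HopfAlgebra ℂ H]

theorem sweedlerShuffle_eq (φ : H) :
    sweedlerShuffle H φ = (TensorProduct.assoc ℂ H H H).symm
      (TensorProduct.map LinearMap.id (TensorProduct.comm ℂ H H).toLinearMap
        (comulThree H φ)) := rfl

theorem sweedlerShuffle_one : sweedlerShuffle H (1 : H) = (1 ⊗ₜ[ℂ] 1) ⊗ₜ[ℂ] 1 := by
  simp [sweedlerShuffle, Algebra.TensorProduct.one_def]

theorem sweedlerShuffle_mul (φ ψ : H) :
    sweedlerShuffle H (φ * ψ) = sweedlerShuffle H φ * sweedlerShuffle H ψ := by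
  let f : H →ₐ[ℂ] (H ⊗[ℂ] H) ⊗[ℂ] H :=
    (Algebra.TensorProduct.assoc ℂ ℂ ℂ H H H).symm.toAlgHom.comp
      ((Algebra.TensorProduct.map (AlgHom.id ℂ H)
          (Algebra.TensorProduct.comm ℂ H H).toAlgHom).comp
        ((Algebra.TensorProduct.map (AlgHom.id ℂ H) (Bialgebra.comulAlgHom ℂ H)).comp
          (Bialgebra.comulAlgHom ℂ H)))
  exact map_mul f φ ψ

end Shuffle

section Twist

variable {H M : Type*} [Ring H] [HopfAlgebra ℂ H] [Ring M] [Algebra ℂ M]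

/-- The map `(φ ⊗ χ) ⊗ ψ ↦ A φ (B χ n) ⊗ ψ`. -/
noncomputable def twist (A B : H →ₗ[ℂ] M →ₗ[ℂ] M) (n : M) :
    (H ⊗[ℂ] H) ⊗[ℂ] H →ₗ[ℂ] M ⊗[ℂ] H :=
  TensorProduct.map (TensorProduct.lift A ∘ₗ TensorProduct.map LinearMap.id (B.flip n))
    LinearMap.id

@[simp]
theorem twist_tmul (A B : H →ₗ[ℂ] M →ₗ[ℂ] M) (n : M) (a b c : H) :
    twist A B n ((a ⊗ₜ[ℂ] c) ⊗ₜ[ℂ] b) = A a (B c n) ⊗ₜ[ℂ] b := by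
  simp [twist]

variable {A B : H →ₗ[ℂ] M →ₗ[ℂ] M}

theorem twist_one (hA : ∀ a, A a 1 = counit (R := ℂ) a • (1 : M))
    (hB : ∀ a, B a 1 = counit (R := ℂ) a • (1 : M)) (φ : H) :
    twist A B 1 (sweedlerShuffle H φ) = 1 ⊗ₜ[ℂ] φ := by
  conv_rhs => rw [← counit_comulThree φ]
  rw [sweedlerShuffle_eq]
  induction comulThree H φ with
  | zero => simp
  | add x y hx hy => simp only [map_add, TensorProduct.tmul_add, hx, hy]
  | tmul a y =>
    induction y with
    | zero => simp
    | add x y hx hy => simp only [map_add, TensorProduct.tmul_add, hx, hy]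
    | tmul b c => simp [hA, hB, smul_smul, TensorProduct.smul_tmul, mul_comm]

theorem twist_mul_tmul (hA : ∀ a b m, A (a * b) m = A a (A b m))
    (hB : ∀ a b m, B (a * b) m = B a (B b m)) (hAB : ∀ a b m, A a (B b m) = B b (A a m))
    (n : M) (x : (H ⊗[ℂ] H) ⊗[ℂ] H) (a b c : H) :
    twist A B n (x * ((a ⊗ₜ[ℂ] c) ⊗ₜ[ℂ] b)) =
      TensorProduct.map LinearMap.id (LinearMap.mulRight ℂ b) (twist A B (A a (B c n)) x) := by
  induction x with
  | zero => simp
  | add x y hx hy => simp only [map_add, add_mul, hx, hy]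
  | tmul y d =>
    induction y with
    | zero => simp
    | add x y hx hy => simp only [map_add, add_mul, TensorProduct.add_tmul, hx, hy]
    | tmul e f => simp [hA, hB, hAB]

/-- The map `(a₁ ⊗ a₂) ⊗ (b ⊗ (c₁ ⊗ c₂)) ↦ A a₁ (B c₂ m) * A a₂ (B c₁ n) ⊗ b`. -/
noncomputable def doubleTwist (A B : H →ₗ[ℂ] M →ₗ[ℂ] M) (m n : M) :
    (H ⊗[ℂ] H) ⊗[ℂ] (H ⊗[ℂ] (H ⊗[ℂ] H)) →ₗ[ℂ] M ⊗[ℂ] H :=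
  TensorProduct.map
      (LinearMap.mul' ℂ M ∘ₗ
        TensorProduct.map
          (TensorProduct.lift A ∘ₗ TensorProduct.map LinearMap.id (B.flip m))
          (TensorProduct.lift A ∘ₗ TensorProduct.map LinearMap.id (B.flip n)) ∘ₗ
        (TensorProduct.tensorTensorTensorComm ℂ H H H H).toLinearMap ∘ₗ
        TensorProduct.map LinearMap.id (TensorProduct.comm ℂ H H).toLinearMap)
      LinearMap.id ∘ₗ
    (TensorProduct.assoc ℂ (H ⊗[ℂ] H) (H ⊗[ℂ] H) H).symm.toLinearMap ∘ₗ
    TensorProduct.map LinearMap.id (TensorProduct.comm ℂ H (H ⊗[ℂ] H)).toLinearMap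

@[simp]
theorem doubleTwist_tmul (m n : M) (a₁ a₂ b c₁ c₂ : H) :
    doubleTwist A B m n ((a₁ ⊗ₜ[ℂ] a₂) ⊗ₜ[ℂ] (b ⊗ₜ[ℂ] (c₁ ⊗ₜ[ℂ] c₂))) =
      (A a₁ (B c₂ m) * A a₂ (B c₁ n)) ⊗ₜ[ℂ] b := by
  simp [doubleTwist]

theorem twist_mul_right
    (hA : ∀ a m n, A a (m * n) =
      LinearMap.mul' ℂ M (TensorProduct.map (A.flip m) (A.flip n) (comul (R := ℂ) a)))
    (hB : ∀ a m n, B a (m * n) = LinearMap.mul' ℂ M (TensorProduct.map (B.flip m) (B.flip n)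
      (TensorProduct.comm ℂ H H (comul (R := ℂ) a))))
    (m n : M) (φ : H) :
    twist A B (m * n) (sweedlerShuffle H φ) =
      doubleTwist A B m n (TensorProduct.map comul (TensorProduct.map LinearMap.id comul)
        (comulThree H φ)) := by
  rw [sweedlerShuffle_eq]
  induction comulThree H φ with
  | zero => simp
  | add x y hx hy => simp only [map_add, hx, hy]
  | tmul a y =>
    induction y with
    | zero => simp
    | add x y hx hy => simp only [map_add, TensorProduct.tmul_add, hx, hy]
    | tmul b c =>
      simp only [TensorProduct.map_tmul, LinearMap.id_apply, LinearEquiv.coe_coe,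
        TensorProduct.comm_tmul, TensorProduct.assoc_symm_tmul, twist_tmul, hB]
      induction comul (R := ℂ) c with
      | zero => simp
      | add x y hx hy =>
        simp only [map_add, TensorProduct.tmul_add, TensorProduct.add_tmul, hx, hy]
      | tmul c₁ c₂ =>
        simp only [TensorProduct.map_tmul, TensorProduct.comm_tmul, LinearMap.mul'_apply,
          LinearMap.flip_apply, hA]
        induction comul (R := ℂ) a with
        | zero => simp
        | add x y hx hy => simp only [map_add, TensorProduct.add_tmul, hx, hy]
        | tmul a₁ a₂ => simp

theorem map_mulLeft_twist (m n : M) (a b c : H) :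
    TensorProduct.map (LinearMap.mulLeft ℂ (A a (B c m))) LinearMap.id
        (twist A B n (sweedlerShuffle H b)) =
      doubleTwist A B m n (fiveAssoc H (a ⊗ₜ[ℂ] (comulThree H b ⊗ₜ[ℂ] c))) := by
  rw [sweedlerShuffle_eq]
  induction comulThree H b with
  | zero => simp
  | add x y hx hy => simp only [map_add, TensorProduct.tmul_add, TensorProduct.add_tmul, hx, hy]
  | tmul d y =>
    induction y with
    | zero => simp
    | add x y hx hy => simp only [map_add, TensorProduct.tmul_add, TensorProduct.add_tmul, hx, hy]
    | tmul e f => simp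

end Twist

section TwistedTensor

variable {H M : Type*} [Ring H] [Algebra ℂ H] [Ring M] [Algebra ℂ M]
  {mul : M ⊗[ℂ] H →ₗ[ℂ] M ⊗[ℂ] H →ₗ[ℂ] M ⊗[ℂ] H}

theorem mul_map_mulLeft
    (hmul : ∀ m n φ ψ, mul (m ⊗ₜ[ℂ] φ) (n ⊗ₜ[ℂ] ψ) =
      TensorProduct.map (LinearMap.mulLeft ℂ m) (LinearMap.mulRight ℂ ψ)
        (mul (1 ⊗ₜ[ℂ] φ) (n ⊗ₜ[ℂ] 1)))
    (m : M) (x y : M ⊗[ℂ] H) :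
    mul (TensorProduct.map (LinearMap.mulLeft ℂ m) LinearMap.id x) y =
      TensorProduct.map (LinearMap.mulLeft ℂ m) LinearMap.id (mul x y) := by
  induction x with
  | zero => simp
  | add x y hx hy => simp only [map_add, LinearMap.add_apply, hx, hy]
  | tmul a φ =>
    induction y with
    | zero => simp
    | add x y hx hy => simp only [map_add, hx, hy]
    | tmul n ψ =>
      rw [TensorProduct.map_tmul, hmul, hmul a, LinearMap.id_apply, LinearMap.mulLeft_apply,
        LinearMap.mulLeft_mul, TensorProduct.map_map, LinearMap.id_comp]

theorem mul_map_mulRight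
    (hmul : ∀ m n φ ψ, mul (m ⊗ₜ[ℂ] φ) (n ⊗ₜ[ℂ] ψ) =
      TensorProduct.map (LinearMap.mulLeft ℂ m) (LinearMap.mulRight ℂ ψ)
        (mul (1 ⊗ₜ[ℂ] φ) (n ⊗ₜ[ℂ] 1)))
    (χ : H) (x y : M ⊗[ℂ] H) :
    mul x (TensorProduct.map LinearMap.id (LinearMap.mulRight ℂ χ) y) =
      TensorProduct.map LinearMap.id (LinearMap.mulRight ℂ χ) (mul x y) := by
  induction x with
  | zero => simp
  | add x y hx hy => simp only [map_add, LinearMap.add_apply, hx, hy]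
  | tmul a φ =>
    induction y with
    | zero => simp
    | add x y hx hy => simp only [map_add, hx, hy]
    | tmul n ψ =>
      rw [TensorProduct.map_tmul, hmul, hmul a, LinearMap.id_apply, LinearMap.mulRight_apply,
        LinearMap.mulRight_mul, TensorProduct.map_map, LinearMap.id_comp]

/-- A twisted product on `M ⊗ H` is associative once the commutation rule is compatible with the
products of `H` and of `M`. -/
theorem twisted_mul_assoc
    (hmul : ∀ m n φ ψ, mul (m ⊗ₜ[ℂ] φ) (n ⊗ₜ[ℂ] ψ) =
      TensorProduct.map (LinearMap.mulLeft ℂ m) (LinearMap.mulRight ℂ ψ)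
        (mul (1 ⊗ₜ[ℂ] φ) (n ⊗ₜ[ℂ] 1)))
    (hH : ∀ φ ψ n, mul (1 ⊗ₜ[ℂ] (φ * ψ)) (n ⊗ₜ[ℂ] 1) =
      mul (1 ⊗ₜ[ℂ] φ) (mul (1 ⊗ₜ[ℂ] ψ) (n ⊗ₜ[ℂ] 1)))
    (hM : ∀ φ m n, mul (1 ⊗ₜ[ℂ] φ) ((m * n) ⊗ₜ[ℂ] 1) =
      mul (mul (1 ⊗ₜ[ℂ] φ) (m ⊗ₜ[ℂ] 1)) (n ⊗ₜ[ℂ] 1))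
    (x y z : M ⊗[ℂ] H) : mul (mul x y) z = mul x (mul y z) := by
  have left_tmul (m : M) (φ : H) :
      m ⊗ₜ[ℂ] φ = TensorProduct.map (LinearMap.mulLeft ℂ m) LinearMap.id (1 ⊗ₜ[ℂ] φ) := by simp
  have right_tmul (m : M) (φ : H) :
      m ⊗ₜ[ℂ] φ = TensorProduct.map LinearMap.id (LinearMap.mulRight ℂ φ) (m ⊗ₜ[ℂ] 1) := by simp
  have hleft (ψ : H) (p : M) (w : M ⊗[ℂ] H) :
      mul (TensorProduct.map LinearMap.id (LinearMap.mulRight ℂ ψ) w) (p ⊗ₜ[ℂ] 1) =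
        mul w (mul (1 ⊗ₜ[ℂ] ψ) (p ⊗ₜ[ℂ] 1)) := by
    induction w with
    | zero => simp
    | add x y hx hy => simp only [map_add, LinearMap.add_apply, hx, hy]
    | tmul a b =>
      rw [TensorProduct.map_tmul, left_tmul, mul_map_mulLeft hmul, left_tmul a b,
        mul_map_mulLeft hmul, ← hH]
      rfl
  have hright (φ : H) (n : M) (w : M ⊗[ℂ] H) :
      mul (1 ⊗ₜ[ℂ] φ) (TensorProduct.map (LinearMap.mulLeft ℂ n) LinearMap.id w) =
        mul (mul (1 ⊗ₜ[ℂ] φ) (n ⊗ₜ[ℂ] 1)) w := by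
    induction w with
    | zero => simp
    | add x y hx hy => simp only [map_add, hx, hy]
    | tmul a b =>
      rw [TensorProduct.map_tmul, right_tmul (LinearMap.mulLeft ℂ n a), mul_map_mulRight hmul,
        right_tmul a b,
        mul_map_mulRight hmul, ← hM]
      rfl
  induction x with
  | zero => simp
  | add x y hx hy => simp only [map_add, LinearMap.add_apply, hx, hy]
  | tmul m φ =>
    induction z with
    | zero => simp
    | add x y hx hy => simp only [map_add, hx, hy]
    | tmul p χ =>
      induction y with
      | zero => simp
      | add x y hx hy => simp only [map_add, LinearMap.add_apply, hx, hy]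
      | tmul n ψ =>
        rw [left_tmul m φ, right_tmul p χ]
        simp only [mul_map_mulLeft hmul, mul_map_mulRight hmul]
        congr 2
        conv_lhs => rw [right_tmul n ψ, mul_map_mulRight hmul, hleft]
        rw [left_tmul n ψ, mul_map_mulLeft hmul, hright]

end TwistedTensor

end DiagonalCrossedProduct

/-- Let `(λ, ρ)` be a commuting pair of left and right coactions of a
finite-dimensional Hopf algebra `G` on `M`, encoded (dually) by the commuting pair of left and
right Hopf module actions `▷ = act` and `◁ = ract` of the dual Hopf algebra `Ĝ = H` on `M`.
Then `M ⊗ Ĝ` with the product `(m ⋈ φ)(n ⋈ ψ) = m(φ₁ ▷ n ◁ Ŝ⁻¹(φ₃)) ⋈ φ₂ψ` is an associative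
unital algebra with unit `1_M ⋈ 1̂`, containing `M ≅ M ⋈ 1̂` and `Ĝ ≅ 1_M ⋈ Ĝ` as unital
subalgebras. -/
theorem statement3
    (H M : Type*) [Ring H] [HopfAlgebra ℂ H] [Ring M] [Algebra ℂ M]
    [FiniteDimensional ℂ H]
    (Si : H →ₗ[ℂ] H)
    (hSi1 : ∀ x : H, Si (HopfAlgebra.antipode (R := ℂ) x) = x)
    (hSi2 : ∀ x : H, HopfAlgebra.antipode (R := ℂ) (Si x) = x)
    -- left Hopf module action `▷` of `Ĝ = H` (dual to `ρ`)
    (act : H →ₗ[ℂ] M →ₗ[ℂ] M)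
    (hact_mul : ∀ (φ ψ : H) (m : M), act (φ * ψ) m = act φ (act ψ m))
    (hact_one : ∀ m : M, act 1 m = m)
    (hact_alg : ∀ (φ : H) (m n : M),
      act φ (m * n) =
        LinearMap.mul' ℂ M
          (TensorProduct.map (act.flip m) (act.flip n) (Coalgebra.comul (R := ℂ) φ)))
    (hact_unit : ∀ φ : H, act φ (1 : M) = Coalgebra.counit (R := ℂ) φ • (1 : M))
    -- right Hopf module action `◁` of `Ĝ = H` (dual to `λ`)
    (ract : H →ₗ[ℂ] M →ₗ[ℂ] M)
    (hract_mul : ∀ (φ ψ : H) (m : M), ract ψ (ract φ m) = ract (φ * ψ) m)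
    (hract_one : ∀ m : M, ract 1 m = m)
    (hract_alg : ∀ (φ : H) (m n : M),
      ract φ (m * n) =
        LinearMap.mul' ℂ M
          (TensorProduct.map (ract.flip m) (ract.flip n) (Coalgebra.comul (R := ℂ) φ)))
    (hract_unit : ∀ φ : H, ract φ (1 : M) = Coalgebra.counit (R := ℂ) φ • (1 : M))
    -- the two actions commute (equivalently, `(λ ⊗ id) ∘ ρ = (id ⊗ ρ) ∘ λ`)
    (hcomm : ∀ (φ ψ : H) (m : M), act φ (ract ψ m) = ract ψ (act φ m))
    -- the diagonal product `(m ⋈ φ)(n ⋈ ψ) = m(φ₁ ▷ n ◁ Ŝ⁻¹(φ₃)) ⋈ φ₂ψ`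
    (mul : M ⊗[ℂ] H →ₗ[ℂ] M ⊗[ℂ] H →ₗ[ℂ] M ⊗[ℂ] H)
    (hmul : ∀ (m n : M) (φ ψ : H),
      mul (m ⊗ₜ[ℂ] φ) (n ⊗ₜ[ℂ] ψ) =
        TensorProduct.map
          (LinearMap.mulLeft ℂ m ∘ₗ TensorProduct.lift act ∘ₗ
            TensorProduct.map LinearMap.id (ract.flip n ∘ₗ Si))
          (LinearMap.mulRight ℂ ψ) (sweedlerShuffle H φ)) :
    -- associativity
    (∀ x y z : M ⊗[ℂ] H, mul (mul x y) z = mul x (mul y z)) ∧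
    -- unit
    (∀ x : M ⊗[ℂ] H, mul ((1 : M) ⊗ₜ[ℂ] (1 : H)) x = x) ∧
    (∀ x : M ⊗[ℂ] H, mul x ((1 : M) ⊗ₜ[ℂ] (1 : H)) = x) ∧
    -- `M ≅ M ⋈ 1̂` is a unital subalgebra
    (∀ m n : M, mul (m ⊗ₜ[ℂ] (1 : H)) (n ⊗ₜ[ℂ] (1 : H)) = (m * n) ⊗ₜ[ℂ] (1 : H)) ∧
    -- `Ĝ ≅ 1_M ⋈ Ĝ` is a unital subalgebra
    (∀ φ ψ : H, mul ((1 : M) ⊗ₜ[ℂ] φ) ((1 : M) ⊗ₜ[ℂ] ψ) = (1 : M) ⊗ₜ[ℂ] (φ * ψ)) := by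
  set B : H →ₗ[ℂ] M →ₗ[ℂ] M := ract ∘ₗ Si
  have hB (a : H) (m : M) : B a m = ract (Si a) m := rfl
  have hB_mul (a b : H) (m : M) : B (a * b) m = B a (B b m) := by
    rw [hB, hB, hB, DiagonalCrossedProduct.inverse_antipode_mul hSi1 hSi2, hract_mul]
  have hB_one (m : M) : B 1 m = m := by
    rw [hB, DiagonalCrossedProduct.inverse_antipode_one hSi1, hract_one]
  have hB_unit (a : H) : B a 1 = Coalgebra.counit (R := ℂ) a • (1 : M) := by
    rw [hB, hract_unit, DiagonalCrossedProduct.counit_inverse_antipode hSi2]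
  have hB_alg (a : H) (m n : M) : B a (m * n) = LinearMap.mul' ℂ M
      (TensorProduct.map (B.flip m) (B.flip n)
        (TensorProduct.comm ℂ H H (Coalgebra.comul (R := ℂ) a))) := by
    rw [hB, hract_alg, DiagonalCrossedProduct.comul_inverse_antipode hSi1 hSi2,
      TensorProduct.map_map]
    rfl
  have hmul_twist (m n : M) (φ ψ : H) : mul (m ⊗ₜ[ℂ] φ) (n ⊗ₜ[ℂ] ψ) =
      TensorProduct.map (LinearMap.mulLeft ℂ m) (LinearMap.mulRight ℂ ψ)
        (DiagonalCrossedProduct.twist act B n (sweedlerShuffle H φ)) := by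
    rw [hmul, DiagonalCrossedProduct.twist, TensorProduct.map_map, LinearMap.comp_id]
    rfl
  have htwist (n : M) (φ : H) : mul (1 ⊗ₜ[ℂ] φ) (n ⊗ₜ[ℂ] 1) =
      DiagonalCrossedProduct.twist act B n (sweedlerShuffle H φ) := by
    rw [hmul_twist, LinearMap.mulLeft_one, LinearMap.mulRight_one, TensorProduct.map_id,
      LinearMap.id_apply]
  have htwist_one (φ : H) := DiagonalCrossedProduct.twist_one hact_unit hB_unit φ
  have hmul_one_left (m n : M) (ψ : H) :
      mul (m ⊗ₜ[ℂ] 1) (n ⊗ₜ[ℂ] ψ) = (m * n) ⊗ₜ[ℂ] ψ := by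
    simp [hmul_twist, DiagonalCrossedProduct.sweedlerShuffle_one, hact_one, hB_one]
  have hmul_one_right (m : M) (φ ψ : H) :
      mul (m ⊗ₜ[ℂ] φ) (1 ⊗ₜ[ℂ] ψ) = m ⊗ₜ[ℂ] (φ * ψ) := by
    simp [hmul_twist, htwist_one]
  refine ⟨DiagonalCrossedProduct.twisted_mul_assoc (fun m n φ ψ ↦ ?_) (fun φ ψ n ↦ ?_)
    (fun φ m n ↦ ?_), fun x ↦ ?_, fun x ↦ ?_, fun m n ↦ hmul_one_left m n 1,
    fun φ ψ ↦ hmul_one_right 1 φ ψ⟩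
  · rw [hmul_twist, htwist]
  · rw [htwist, htwist, DiagonalCrossedProduct.sweedlerShuffle_mul]
    induction sweedlerShuffle H ψ with
    | zero => simp
    | add x y hx hy => simp only [mul_add, map_add, hx, hy]
    | tmul y b =>
      induction y with
      | zero => simp
      | add x y hx hy => simp only [TensorProduct.add_tmul, mul_add, map_add, hx, hy]
      | tmul a c =>
        rw [DiagonalCrossedProduct.twist_mul_tmul hact_mul hB_mul (fun a b m ↦ hcomm a (Si b) m),
          DiagonalCrossedProduct.twist_tmul, hmul_twist, LinearMap.mulLeft_one]
  · rw [htwist, htwist, DiagonalCrossedProduct.twist_mul_right hact_alg hB_alg,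
      ← LinearMap.comp_apply (TensorProduct.map _ _),
      DiagonalCrossedProduct.map_comul_comulThree, LinearMap.comp_apply, LinearMap.comp_apply,
      DiagonalCrossedProduct.sweedlerShuffle_eq]
    induction DiagonalCrossedProduct.comulThree H φ with
    | zero => simp
    | add x y hx hy => simp only [map_add, LinearMap.add_apply, hx, hy]
    | tmul a y =>
      induction y with
      | zero => simp
      | add x y hx hy => simp only [map_add, TensorProduct.tmul_add, LinearMap.add_apply, hx, hy]
      | tmul b c =>
        simp only [TensorProduct.map_tmul, LinearMap.id_apply, LinearEquiv.coe_coe,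
          TensorProduct.comm_tmul, TensorProduct.assoc_symm_tmul,
          DiagonalCrossedProduct.twist_tmul]
        rw [hmul_twist, LinearMap.mulRight_one, DiagonalCrossedProduct.map_mulLeft_twist]
  · induction x with
    | zero => simp
    | add x y hx hy => simp only [map_add, hx, hy]
    | tmul m φ => rw [hmul_one_left, one_mul]
  · induction x with
    | zero => simp
    | add x y hx hy => simp only [map_add, LinearMap.add_apply, hx, hy]
    | tmul m φ => rw [hmul_one_right, mul_one]
end

section
/- Let G be a finite-dimensional Hopf algebra and (λ, ρ) a commuting pair of coactions on M with dual actions ▷, ◁. Then the vector space Ĝ ⊗ M with product (φ ⋈ m)(ψ ⋈ n) := φψ₍₂₎ ⋈ (Ŝ⁻¹(ψ₍₁₎) ▷ m ◁ ψ₍₃₎)n is an associative unital algebra, and the map Ĝ ⋈ M → M ⋈ Ĝ sending φ ⋈ m to (φ₍₁₎ ▷ m ◁ Ŝ⁻¹(φ₍₃₎)) ⋈ φ₍₂₎ is an algebra isomorphism restricting to the identity on M, with inverse sending m ⋈ φ to φ₍₂₎ ⋈ (Ŝ⁻¹(φ₍₁₎) ▷ m ◁ φ₍₃₎). -/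
open TensorProduct

namespace DiagonalCrossedProduct

open Coalgebra LinearMap WithConv

variable {R H M : Type*} [CommRing R] [Ring H] [Ring M] [Algebra R M]

section InverseAntipode

variable [HopfAlgebra R H] {T : H →ₗ[R] H}

/-- An inverse of the antipode is an algebra antihomomorphism. -/
theorem inverse_antipode_mul_s5 (hT : ∀ x, T (HopfAlgebra.antipode R x) = x)
    (hT' : ∀ x, HopfAlgebra.antipode R (T x) = x) (x y : H) : T (x * y) = T y * T x := by
  rw [← hT (T y * T x), HopfAlgebra.antipode_mul_antidistrib, hT', hT']

theorem inverse_antipode_one_s5 (hT : ∀ x, T (HopfAlgebra.antipode R x) = x) : T 1 = 1 := by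
  simpa using hT 1

/-- `T(φ₍₂₎) φ₍₁₎ = ε(φ)` for an inverse `T` of the antipode. -/
theorem sum_inverse_antipode_right_mul_left (hT : ∀ x, T (HopfAlgebra.antipode R x) = x)
    (hT' : ∀ x, HopfAlgebra.antipode R (T x) = x) {φ : H} {ι : Type*} (r : Repr R φ ι) :
    ∑ i ∈ r.index, T (r.right i) * r.left i = counit (R := R) φ • (1 : H) := by
  apply (Function.LeftInverse.injective hT)
  simp [HopfAlgebra.antipode_mul_antidistrib, hT', HopfAlgebra.sum_antipode_mul_eq_smul]

/-- `φ₍₂₎ T(φ₍₁₎) = ε(φ)` for an inverse `T` of the antipode. -/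
theorem sum_right_mul_inverse_antipode_left (hT : ∀ x, T (HopfAlgebra.antipode R x) = x)
    (hT' : ∀ x, HopfAlgebra.antipode R (T x) = x) {φ : H} {ι : Type*} (r : Repr R φ ι) :
    ∑ i ∈ r.index, r.right i * T (r.left i) = counit (R := R) φ • (1 : H) := by
  apply (Function.LeftInverse.injective hT)
  simp [HopfAlgebra.antipode_mul_antidistrib, hT', HopfAlgebra.sum_mul_antipode_eq_smul]

end InverseAntipode

section Twist

variable [Bialgebra R H]

/-- The map `m ⊗ φ ↦ α(φ₍₁₎)(m) ⊗ φ₍₂₎`. -/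
noncomputable def twistLeft (α : H →ₗ[R] Module.End R M) : M ⊗[R] H →ₗ[R] M ⊗[R] H :=
  TensorProduct.lift (lcomp R (M ⊗[R] H) (comul (R := R) (A := H)) ∘ₗ rTensorHom H ∘ₗ α.flip)

/-- The map `m ⊗ φ ↦ α(φ₍₂₎)(m) ⊗ φ₍₁₎`. -/
noncomputable def twistRight (α : H →ₗ[R] Module.End R M) : M ⊗[R] H →ₗ[R] M ⊗[R] H :=
  (TensorProduct.comm R H M).toLinearMap ∘ₗ
    TensorProduct.lift (lcomp R (H ⊗[R] M) (comul (R := R) (A := H)) ∘ₗ lTensorHom H ∘ₗ α.flip)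

theorem twistLeft_tmul (α : H →ₗ[R] Module.End R M) (m : M) (φ : H) :
    twistLeft α (m ⊗ₜ φ) = (α.flip m).rTensor H (comul φ) := rfl

theorem twistRight_tmul (α : H →ₗ[R] Module.End R M) (m : M) (φ : H) :
    twistRight α (m ⊗ₜ φ) = TensorProduct.comm R H M ((α.flip m).lTensor H (comul φ)) := rfl

theorem twistLeft_comp_twistLeft {α β : H →ₗ[R] Module.End R M}
    (h : ∀ (m : M) (φ : H), TensorProduct.lift (α.flip ∘ₗ β.flip m) (comul φ) =
      counit (R := R) φ • m) :
    twistLeft α ∘ₗ twistLeft β = .id := by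
  ext m φ
  have key : ∀ t : H ⊗[R] H, twistLeft α ((β.flip m).rTensor H t) =
      (TensorProduct.lift (α.flip ∘ₗ β.flip m)).rTensor H
        ((TensorProduct.assoc R H H H).symm (comul.lTensor H t)) := by
    intro t
    induction t with
    | zero => simp
    | add x y hx hy => simp only [map_add, hx, hy]
    | tmul a b =>
      simp only [rTensor_tmul, lTensor_tmul, twistLeft_tmul]
      generalize (comul b : H ⊗[R] H) = s
      induction s with
      | zero => simp
      | add x y hx hy => simp only [map_add, hx, hy, TensorProduct.tmul_add]
      | tmul c d => simp
  have hlift : TensorProduct.lift (α.flip ∘ₗ β.flip m) ∘ₗ comul =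
      toSpanSingleton R M m ∘ₗ counit := by
    ext φ; simp [h]
  simp only [AlgebraTensorModule.curry_apply, restrictScalars_self, curry_apply, comp_apply,
    id_coe, id_eq]
  rw [twistLeft_tmul, key, coassoc_symm_apply, ← comp_apply, ← rTensor_comp, hlift, rTensor_comp,
    comp_apply, rTensor_counit_comul]
  simp

theorem twistRight_comp_twistRight {α β : H →ₗ[R] Module.End R M}
    (h : toConv α * toConv β = 1) :
    twistRight α ∘ₗ twistRight β = .id := by
  ext m φ
  have key : ∀ t : H ⊗[R] H, twistRight α (TensorProduct.comm R H M ((β.flip m).lTensor H t)) =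
      TensorProduct.comm R H M
        ((applyₗ m ∘ₗ mul' R (Module.End R M) ∘ₗ TensorProduct.map α β).lTensor H
          (TensorProduct.assoc R H H H (comul.rTensor H t))) := by
    intro t
    induction t with
    | zero => simp
    | add x y hx hy => simp only [map_add, hx, hy]
    | tmul a b =>
      simp only [rTensor_tmul, lTensor_tmul, twistRight_tmul, TensorProduct.comm_tmul]
      generalize (comul a : H ⊗[R] H) = s
      induction s with
      | zero => simp
      | add x y hx hy => simp only [map_add, hx, hy, TensorProduct.add_tmul]
      | tmul c d => simp
  have hlift : (applyₗ m ∘ₗ mul' R (Module.End R M) ∘ₗ TensorProduct.map α β) ∘ₗ comul =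
      toSpanSingleton R M m ∘ₗ counit := by
    ext φ
    have := congr(($h).ofConv φ m)
    simpa [LinearMap.convMul_def, LinearMap.convOne_def, Algebra.algebraMap_eq_smul_one] using this
  simp only [AlgebraTensorModule.curry_apply, restrictScalars_self, curry_apply, comp_apply,
    id_coe, id_eq]
  rw [twistRight_tmul, key, coassoc_apply, ← comp_apply (lTensor _ _), ← lTensor_comp, hlift,
    lTensor_comp, comp_apply, lTensor_counit_comul]
  simp

end Twist

section Operators

variable [Bialgebra R H]

variable (R H) in
/-- Left multiplication by `M` on the first factor of `M ⊗ H`. -/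
noncomputable def leftMul : M →ₐ[R] Module.End R (M ⊗[R] H) :=
  (Module.End.rTensorAlgHom R M H).comp (Algebra.lmul R M)

@[simp]
theorem leftMul_tmul (m n : M) (φ : H) : leftMul R H m (n ⊗ₜ φ) = (m * n) ⊗ₜ φ := rfl

theorem commute_rTensorAlgHom_lTensorAlgHom (u : Module.End R M) (v : Module.End R H) :
    Commute (Module.End.rTensorAlgHom R M H u) (Module.End.lTensorAlgHom R H M v) :=
  TensorProduct.ext' fun _ _ ↦ rfl

variable {a b : H →ₐ[R] Module.End R M} {bInv : H →ₗ[R] Module.End R M}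

/-- For commuting representations `a`, `b` of `H` on `M`, the representation
`φ ↦ (n ⊗ ψ ↦ a(φ₍₁₎) b(φ₍₃₎) n ⊗ φ₍₂₎ ψ)` of `H` on `M ⊗ H`. -/
noncomputable def diagonalRep (hab : ∀ φ ψ, Commute (a φ) (b ψ)) :
    H →ₐ[R] Module.End R (M ⊗[R] H) :=
  (Algebra.TensorProduct.lift ((Module.End.rTensorAlgHom R M H).comp a)
    (Algebra.TensorProduct.lift ((Module.End.lTensorAlgHom R H M).comp (Algebra.lmul R H))
      ((Module.End.rTensorAlgHom R M H).comp b)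
      (fun φ ψ ↦ (commute_rTensorAlgHom_lTensorAlgHom (b ψ) (Algebra.lmul R H φ)).symm))
    (fun φ t ↦ by
      induction t with
      | zero => simp
      | add x y hx hy => rw [map_add]; exact hx.add_right hy
      | tmul x y =>
        exact Commute.mul_right (commute_rTensorAlgHom_lTensorAlgHom (a φ) (Algebra.lmul R H x))
          ((hab φ y).map (Module.End.rTensorAlgHom R M H)))).comp
    ((Algebra.TensorProduct.map (AlgHom.id R H) (Bialgebra.comulAlgHom R H)).comp
      (Bialgebra.comulAlgHom R H))

theorem convMul_toSpanSingleton_comp_counit {A : Type*} [Ring A] [Algebra R A]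
    (u : H →ₗ[R] A) (x : A) :
    toConv u * toConv (toSpanSingleton R A x ∘ₗ counit) = toConv (mulRight R x ∘ₗ u) := by
  ext φ
  have h := congr(mul' R A (TensorProduct.map u (toSpanSingleton R A x)
    $(lTensor_counit_comul (R := R) φ)))
  rw [lTensor, ← comp_apply (TensorProduct.map _ _), ← TensorProduct.map_comp] at h
  simpa [LinearMap.convMul_def] using h

theorem toSpanSingleton_comp_counit_convMul {A : Type*} [Ring A] [Algebra R A]
    (u : H →ₗ[R] A) (x : A) :
    toConv (toSpanSingleton R A x ∘ₗ counit) * toConv u = toConv (mulLeft R x ∘ₗ u) := by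
  ext φ
  have h := congr(mul' R A (TensorProduct.map (toSpanSingleton R A x) u
    $(rTensor_counit_comul (R := R) φ)))
  rw [rTensor, ← comp_apply (TensorProduct.map _ _), ← TensorProduct.map_comp] at h
  simpa [LinearMap.convMul_def] using h

theorem toConv_diagonalRep (hab : ∀ φ ψ, Commute (a φ) (b ψ)) :
    toConv (diagonalRep hab).toLinearMap =
      toConv ((Module.End.rTensorAlgHom R M H).toLinearMap ∘ₗ a.toLinearMap) *
        (toConv ((Module.End.lTensorAlgHom R H M).toLinearMap ∘ₗ
            (Algebra.lmul R H).toLinearMap) *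
          toConv ((Module.End.rTensorAlgHom R M H).toLinearMap ∘ₗ b.toLinearMap)) := by
  apply WithConv.ext
  ext φ : 1
  simp only [diagonalRep, LinearMap.convMul_def, AlgHom.comp_toLinearMap, comp_apply,
    AlgHom.toLinearMap_apply, Bialgebra.comulAlgHom_apply]
  generalize (comul φ : H ⊗[R] H) = t
  induction t with
  | zero => simp
  | add x y hx hy => simp only [map_add, hx, hy]
  | tmul x y =>
    simp only [Algebra.TensorProduct.map_tmul, AlgHom.id_apply, Bialgebra.comulAlgHom_apply,
      TensorProduct.map_tmul, mul'_apply, comp_apply, AlgHom.toLinearMap_apply,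
      Algebra.TensorProduct.lift_tmul, AlgHom.comp_apply]
    generalize (comul y : H ⊗[R] H) = s
    induction s with
    | zero => simp
    | add x y hx hy => simp only [map_add, mul_add, hx, hy]
    | tmul z w => rfl

/-- A module algebra structure `α` satisfies `α(φ) n = (α(φ₍₁₎) n) α(φ₍₂₎)` as operators on
`M ⊗ H`. -/
theorem rTensor_convMul_leftMul {α : H →ₗ[R] Module.End R M}
    (hα : ∀ (φ : H) (m n : M), α φ (m * n) =
      mul' R M (TensorProduct.map (α.flip m) (α.flip n) (comul φ))) (n : M) :
    toConv ((Module.End.rTensorAlgHom R M H).toLinearMap ∘ₗ α) *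
        toConv (toSpanSingleton R _ (leftMul R H n) ∘ₗ counit) =
      toConv ((leftMul R H).toLinearMap ∘ₗ α.flip n) *
        toConv ((Module.End.rTensorAlgHom R M H).toLinearMap ∘ₗ α) := by
  rw [convMul_toSpanSingleton_comp_counit]
  apply WithConv.ext
  ext φ m ψ
  change α φ (n * m) ⊗ₜ[R] ψ =
    (mul' R (Module.End R (M ⊗[R] H)) (TensorProduct.map
      ((leftMul R H).toLinearMap ∘ₗ α.flip n)
      ((Module.End.rTensorAlgHom R M H).toLinearMap ∘ₗ α) (comul φ))) (m ⊗ₜ ψ)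
  rw [hα]
  generalize (comul φ : H ⊗[R] H) = t
  induction t with
  | zero => simp
  | add x y hx hy => simp only [map_add, TensorProduct.add_tmul, LinearMap.add_apply, hx, hy]
  | tmul x y => rfl

/-- The relation `φ₍₁₎ (n ◁ φ₍₂₎) = (φ₍₁₎ ▷ n) φ₍₂₎` of the diagonal crossed product. -/
theorem diagonalRep_convMul_leftMul (hab : ∀ φ ψ, Commute (a φ) (b ψ))
    (hb_bInv : toConv b.toLinearMap * toConv bInv = 1)
    (hbInv_b : toConv bInv * toConv b.toLinearMap = 1)
    (ha : ∀ (φ : H) (m n : M), a φ (m * n) =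
      mul' R M (TensorProduct.map (a.toLinearMap.flip m) (a.toLinearMap.flip n) (comul φ)))
    (hbInv : ∀ (φ : H) (m n : M), bInv φ (m * n) =
      mul' R M (TensorProduct.map (bInv.flip m) (bInv.flip n) (comul φ))) (n : M) :
    toConv (diagonalRep hab).toLinearMap * toConv ((leftMul R H).toLinearMap ∘ₗ bInv.flip n) =
      toConv ((leftMul R H).toLinearMap ∘ₗ a.toLinearMap.flip n) *
        toConv (diagonalRep hab).toLinearMap := by
  have hA := rTensor_convMul_leftMul (α := a.toLinearMap) ha n
  have hB := rTensor_convMul_leftMul hbInv n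
  have hH : toConv ((Module.End.lTensorAlgHom R H M).toLinearMap ∘ₗ
        (Algebra.lmul R H).toLinearMap) *
        toConv (toSpanSingleton R _ (leftMul R H n) ∘ₗ counit) =
      toConv (toSpanSingleton R _ (leftMul R H n) ∘ₗ counit) *
        toConv ((Module.End.lTensorAlgHom R H M).toLinearMap ∘ₗ
          (Algebra.lmul R H).toLinearMap) := by
    rw [convMul_toSpanSingleton_comp_counit, toSpanSingleton_comp_counit_convMul]
    apply WithConv.ext
    ext φ m ψ
    rfl
  have push : ∀ {u v : H →ₗ[R] Module.End R M}, toConv u * toConv v = 1 →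
      toConv ((Module.End.rTensorAlgHom R M H).toLinearMap ∘ₗ u) *
        toConv ((Module.End.rTensorAlgHom R M H).toLinearMap ∘ₗ v) = 1 := by
    intro u v huv
    apply WithConv.ext
    have := algHom_comp_convMul_distrib (Module.End.rTensorAlgHom R M H) (toConv u) (toConv v)
    rw [huv] at this
    rw [← this]
    ext φ : 1
    simp [LinearMap.convOne_def]
  have h₁ := push hb_bInv
  have h₂ := push hbInv_b
  rw [toConv_diagonalRep]
  generalize toConv ((Module.End.rTensorAlgHom R M H).toLinearMap ∘ₗ a.toLinearMap) = A at *
  generalize toConv ((Module.End.rTensorAlgHom R M H).toLinearMap ∘ₗ b.toLinearMap) = B at *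
  generalize toConv ((Module.End.rTensorAlgHom R M H).toLinearMap ∘ₗ bInv) = BInv at *
  generalize toConv (toSpanSingleton R (Module.End R (M ⊗[R] H)) (leftMul R H n) ∘ₗ
    counit (A := H)) = c at *
  generalize toConv ((leftMul R H).toLinearMap ∘ₗ bInv.flip n) = l at *
  have hBc : B * l = c * B := by
    calc B * l = B * (l * BInv) * B := by rw [mul_assoc, mul_assoc, h₂, mul_one]
      _ = B * BInv * (c * B) := by rw [← hB]; simp only [mul_assoc]
      _ = c * B := by rw [h₁, one_mul]
  rw [mul_assoc, mul_assoc, hBc, ← mul_assoc _ c, hH, mul_assoc, ← mul_assoc A, hA, mul_assoc]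

/-- The map `φ ⊗ m ↦ φ m` from `H ⊗ M` to operators on `M ⊗ H`. -/
noncomputable def opLeft (hab : ∀ φ ψ, Commute (a φ) (b ψ)) :
    H ⊗[R] M →ₗ[R] Module.End R (M ⊗[R] H) :=
  mul' R _ ∘ₗ TensorProduct.map (diagonalRep hab).toLinearMap (leftMul R H).toLinearMap

/-- The map `m ⊗ φ ↦ m φ` from `M ⊗ H` to operators on `M ⊗ H`. -/
noncomputable def opRight (hab : ∀ φ ψ, Commute (a φ) (b ψ)) :
    M ⊗[R] H →ₗ[R] Module.End R (M ⊗[R] H) :=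
  mul' R _ ∘ₗ TensorProduct.map (leftMul R H).toLinearMap (diagonalRep hab).toLinearMap

@[simp]
theorem opLeft_tmul (hab : ∀ φ ψ, Commute (a φ) (b ψ)) (φ : H) (m : M) :
    opLeft hab (φ ⊗ₜ m) = diagonalRep hab φ * leftMul R H m := rfl

@[simp]
theorem opRight_tmul (hab : ∀ φ ψ, Commute (a φ) (b ψ)) (φ : H) (m : M) :
    opRight hab (m ⊗ₜ φ) = leftMul R H m * diagonalRep hab φ := rfl

theorem opLeft_comm_twistRight (hab : ∀ φ ψ, Commute (a φ) (b ψ))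
    (hb_bInv : toConv b.toLinearMap * toConv bInv = 1)
    (hbInv_b : toConv bInv * toConv b.toLinearMap = 1)
    (ha : ∀ (φ : H) (m n : M), a φ (m * n) =
      mul' R M (TensorProduct.map (a.toLinearMap.flip m) (a.toLinearMap.flip n) (comul φ)))
    (hbInv : ∀ (φ : H) (m n : M), bInv φ (m * n) =
      mul' R M (TensorProduct.map (bInv.flip m) (bInv.flip n) (comul φ))) (z : M ⊗[R] H) :
    opLeft hab (TensorProduct.comm R M H (twistRight bInv z)) =
      opRight hab (twistLeft a.toLinearMap z) := by
  induction z with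
  | zero => simp
  | add x y hx hy => simp only [map_add, hx, hy]
  | tmul m φ =>
    have h := congr(($(diagonalRep_convMul_leftMul hab hb_bInv hbInv_b ha hbInv m)).ofConv φ)
    rw [LinearMap.convMul_def, LinearMap.convMul_def] at h
    simp only [comp_apply] at h
    rw [twistRight_tmul, twistLeft_tmul, opLeft, opRight, comp_apply, comp_apply]
    convert! h using 2
    · generalize (comul φ : H ⊗[R] H) = t
      induction t with
      | zero => simp
      | add x y hx hy => simp only [map_add, hx, hy]
      | tmul x y => simp
    · generalize (comul φ : H ⊗[R] H) = t
      induction t with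
      | zero => simp
      | add x y hx hy => simp only [map_add, hx, hy]
      | tmul x y => simp

theorem opLeft_comm_map_mul (hab : ∀ φ ψ, Commute (a φ) (b ψ)) (n : M) (φ : H) (z : M ⊗[R] H) :
    opLeft hab (TensorProduct.comm R M H
        (TensorProduct.map (mulRight R n) (mulLeft R φ) z)) =
      diagonalRep hab φ * opLeft hab (TensorProduct.comm R M H z) * leftMul R H n := by
  induction z with
  | zero => simp
  | add x y hx hy => simp only [map_add, hx, hy, mul_add, add_mul]
  | tmul m ψ => simp [mul_assoc]

end Operators

section Shuffle

variable {H M : Type*} [Ring H] [HopfAlgebra ℂ H] [Ring M] [Algebra ℂ M]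

theorem twistLeft_twistRight (α β : H →ₗ[ℂ] Module.End ℂ M) (m : M) (φ : H) :
    twistLeft α (twistRight β (m ⊗ₜ φ)) =
      TensorProduct.map (TensorProduct.lift α ∘ₗ TensorProduct.map .id (β.flip m)) .id
        (sweedlerShuffle H φ) := by
  have h := coassoc_apply (R := ℂ) φ
  simp only [sweedlerShuffle, comp_apply, LinearEquiv.coe_coe, ← lTensor_def]
  rw [← h, twistRight_tmul]
  generalize (comul φ : H ⊗[ℂ] H) = t
  induction t with
  | zero => simp
  | add x y hx hy => simp only [map_add, hx, hy]
  | tmul x y =>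
    simp only [lTensor_tmul, rTensor_tmul, TensorProduct.comm_tmul, twistLeft_tmul]
    generalize (comul x : H ⊗[ℂ] H) = s
    induction s with
    | zero => simp
    | add x y hx hy => simp only [map_add, hx, hy, TensorProduct.add_tmul]
    | tmul z w => simp

theorem twistRight_twistLeft (α β : H →ₗ[ℂ] Module.End ℂ M)
    (hαβ : ∀ φ ψ m, α φ (β ψ m) = β ψ (α φ m)) (m : M) (φ : H) :
    twistRight β (twistLeft α (m ⊗ₜ φ)) =
      TensorProduct.map (TensorProduct.lift α ∘ₗ TensorProduct.map .id (β.flip m)) .id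
        (sweedlerShuffle H φ) := by
  simp only [sweedlerShuffle, comp_apply, LinearEquiv.coe_coe, ← lTensor_def]
  rw [twistLeft_tmul]
  generalize (comul φ : H ⊗[ℂ] H) = t
  induction t with
  | zero => simp
  | add x y hx hy => simp only [map_add, hx, hy]
  | tmul x y =>
    simp only [lTensor_tmul, rTensor_tmul, twistRight_tmul]
    generalize (comul y : H ⊗[ℂ] H) = s
    induction s with
    | zero => simp
    | add x y hx hy => simp only [map_add, hx, hy, TensorProduct.tmul_add]
    | tmul z w => simp [hαβ]

theorem diagonalRep_tmul {a b : H →ₐ[ℂ] Module.End ℂ M} (hab : ∀ φ ψ, Commute (a φ) (b ψ))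
    (n : M) (φ ψ : H) :
    diagonalRep hab φ (n ⊗ₜ ψ) =
      TensorProduct.map
        (TensorProduct.lift a.toLinearMap ∘ₗ TensorProduct.map .id (b.toLinearMap.flip n))
        (mulRight ℂ ψ) (sweedlerShuffle H φ) := by
  have h := congr(($(toConv_diagonalRep hab)).ofConv φ (n ⊗ₜ ψ))
  simp only [LinearMap.convMul_def, comp_apply, AlgHom.toLinearMap_apply] at h
  rw [h]
  simp only [sweedlerShuffle, comp_apply, LinearEquiv.coe_coe]
  generalize (comul φ : H ⊗[ℂ] H) = t
  induction t with
  | zero => simp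
  | add x y hx hy => simp only [map_add, LinearMap.add_apply, hx, hy]
  | tmul x y =>
    simp only [TensorProduct.map_tmul, mul'_apply, comp_apply]
    generalize (comul y : H ⊗[ℂ] H) = s
    induction s with
    | zero => simp
    | add x y hx hy =>
      simp only [map_add, mul_add, LinearMap.add_apply, TensorProduct.tmul_add, hx, hy]
    | tmul z w => rfl

end Shuffle

end DiagonalCrossedProduct

open DiagonalCrossedProduct

/-- For a finite-dimensional Hopf algebra `G` and a commuting pair of
coactions `(λ, ρ)` on `M` with dual actions `▷ = act`, `◁ = ract` of `Ĝ = H`, the vector space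
`Ĝ ⊗ M` with the product `(φ ⋈ m)(ψ ⋈ n) = φψ₂ ⋈ (Ŝ⁻¹(ψ₁) ▷ m ◁ ψ₃)n` is an associative
unital algebra, and `f : Ĝ ⋈ M → M ⋈ Ĝ`, `φ ⋈ m ↦ (φ₁ ▷ m ◁ Ŝ⁻¹(φ₃)) ⋈ φ₂`, is an algebra
isomorphism restricting to the identity on `M`, with inverse
`m ⋈ φ ↦ φ₂ ⋈ (Ŝ⁻¹(φ₁) ▷ m ◁ φ₃)`. -/
theorem statement5
    (H M : Type*) [Ring H] [HopfAlgebra ℂ H] [Ring M] [Algebra ℂ M]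
    [FiniteDimensional ℂ H]
    (Si : H →ₗ[ℂ] H)
    (hSi1 : ∀ x : H, Si (HopfAlgebra.antipode (R := ℂ) x) = x)
    (hSi2 : ∀ x : H, HopfAlgebra.antipode (R := ℂ) (Si x) = x)
    -- left Hopf module action `▷` of `Ĝ = H` (dual to `ρ`)
    (act : H →ₗ[ℂ] M →ₗ[ℂ] M)
    (hact_mul : ∀ (φ ψ : H) (m : M), act (φ * ψ) m = act φ (act ψ m))
    (hact_one : ∀ m : M, act 1 m = m)
    (hact_alg : ∀ (φ : H) (m n : M),
      act φ (m * n) =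
        LinearMap.mul' ℂ M
          (TensorProduct.map (act.flip m) (act.flip n) (Coalgebra.comul (R := ℂ) φ)))
    (hact_unit : ∀ φ : H, act φ (1 : M) = Coalgebra.counit (R := ℂ) φ • (1 : M))
    -- right Hopf module action `◁` of `Ĝ = H` (dual to `λ`)
    (ract : H →ₗ[ℂ] M →ₗ[ℂ] M)
    (hract_mul : ∀ (φ ψ : H) (m : M), ract ψ (ract φ m) = ract (φ * ψ) m)
    (hract_one : ∀ m : M, ract 1 m = m)
    (hract_alg : ∀ (φ : H) (m n : M),
      ract φ (m * n) =
        LinearMap.mul' ℂ M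
          (TensorProduct.map (ract.flip m) (ract.flip n) (Coalgebra.comul (R := ℂ) φ)))
    (hract_unit : ∀ φ : H, ract φ (1 : M) = Coalgebra.counit (R := ℂ) φ • (1 : M))
    (hcomm : ∀ (φ ψ : H) (m : M), act φ (ract ψ m) = ract ψ (act φ m))
    -- the right diagonal crossed product `M ⋈ Ĝ`
    (mulR : M ⊗[ℂ] H →ₗ[ℂ] M ⊗[ℂ] H →ₗ[ℂ] M ⊗[ℂ] H)
    (hmulR : ∀ (m n : M) (φ ψ : H),
      mulR (m ⊗ₜ[ℂ] φ) (n ⊗ₜ[ℂ] ψ) =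
        TensorProduct.map
          (LinearMap.mulLeft ℂ m ∘ₗ TensorProduct.lift act ∘ₗ
            TensorProduct.map LinearMap.id (ract.flip n ∘ₗ Si))
          (LinearMap.mulRight ℂ ψ) (sweedlerShuffle H φ))
    -- the left diagonal crossed product `Ĝ ⋈ M` with product
    -- `(φ ⋈ m)(ψ ⋈ n) = φψ₂ ⋈ (Ŝ⁻¹(ψ₁) ▷ m ◁ ψ₃)n`
    (mulL : H ⊗[ℂ] M →ₗ[ℂ] H ⊗[ℂ] M →ₗ[ℂ] H ⊗[ℂ] M)
    (hmulL : ∀ (φ ψ : H) (m n : M),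
      mulL (φ ⊗ₜ[ℂ] m) (ψ ⊗ₜ[ℂ] n) =
        (TensorProduct.comm ℂ M H)
          (TensorProduct.map
            (LinearMap.mulRight ℂ n ∘ₗ TensorProduct.lift act ∘ₗ
              TensorProduct.map Si (ract.flip m))
            (LinearMap.mulLeft ℂ φ) (sweedlerShuffle H ψ)))
    -- the map `f : Ĝ ⋈ M → M ⋈ Ĝ`, `φ ⋈ m ↦ (φ₁ ▷ m ◁ Ŝ⁻¹(φ₃)) ⋈ φ₂`
    (f : H ⊗[ℂ] M →ₗ[ℂ] M ⊗[ℂ] H)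
    (hf : ∀ (φ : H) (m : M),
      f (φ ⊗ₜ[ℂ] m) =
        TensorProduct.map
          (TensorProduct.lift act ∘ₗ TensorProduct.map LinearMap.id (ract.flip m ∘ₗ Si))
          LinearMap.id (sweedlerShuffle H φ))
    -- the map `g : M ⋈ Ĝ → Ĝ ⋈ M`, `m ⋈ φ ↦ φ₂ ⋈ (Ŝ⁻¹(φ₁) ▷ m ◁ φ₃)`
    (g : M ⊗[ℂ] H →ₗ[ℂ] H ⊗[ℂ] M)
    (hg : ∀ (m : M) (φ : H),
      g (m ⊗ₜ[ℂ] φ) =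
        (TensorProduct.comm ℂ M H)
          (TensorProduct.map
            (TensorProduct.lift act ∘ₗ TensorProduct.map Si (ract.flip m))
            LinearMap.id (sweedlerShuffle H φ))) :
    -- `Ĝ ⋈ M` is an associative unital algebra
    (∀ x y z : H ⊗[ℂ] M, mulL (mulL x y) z = mulL x (mulL y z)) ∧
    (∀ x : H ⊗[ℂ] M, mulL ((1 : H) ⊗ₜ[ℂ] (1 : M)) x = x) ∧
    (∀ x : H ⊗[ℂ] M, mulL x ((1 : H) ⊗ₜ[ℂ] (1 : M)) = x) ∧
    -- `f` is an algebra isomorphism restricting to the identity on `M`, with inverse `g`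
    (∀ x y : H ⊗[ℂ] M, f (mulL x y) = mulR (f x) (f y)) ∧
    (∀ m : M, f ((1 : H) ⊗ₜ[ℂ] m) = m ⊗ₜ[ℂ] (1 : H)) ∧
    (∀ x : H ⊗[ℂ] M, g (f x) = x) ∧
    (∀ y : M ⊗[ℂ] H, f (g y) = y) := by
  let a : H →ₐ[ℂ] Module.End ℂ M := AlgHom.ofLinearMap act (LinearMap.ext hact_one)
    fun φ ψ ↦ LinearMap.ext (hact_mul φ ψ)
  let b : H →ₐ[ℂ] Module.End ℂ M := AlgHom.ofLinearMap (ract ∘ₗ Si)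
    (LinearMap.ext fun m ↦ by simp [inverse_antipode_one_s5 hSi1, hract_one])
    fun φ ψ ↦ LinearMap.ext fun m ↦ by simp [inverse_antipode_mul_s5 hSi1 hSi2, hract_mul]
  have hab : ∀ φ ψ, Commute (a φ) (b ψ) := fun φ ψ ↦ LinearMap.ext fun m ↦ hcomm φ (Si ψ) m
  have hb_ract : WithConv.toConv b.toLinearMap * WithConv.toConv ract = 1 := by
    ext φ m
    rw [(Coalgebra.Repr.arbitrary ℂ φ).convMul_apply]
    have h := congr(ract $(sum_right_mul_inverse_antipode_left hSi1 hSi2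
      (Coalgebra.Repr.arbitrary ℂ φ)) m)
    simpa [b, hract_mul, hract_one, LinearMap.sum_apply, Algebra.algebraMap_eq_smul_one] using h
  have hract_b : WithConv.toConv ract * WithConv.toConv b.toLinearMap = 1 := by
    ext φ m
    rw [(Coalgebra.Repr.arbitrary ℂ φ).convMul_apply]
    have h := congr(ract $(sum_inverse_antipode_right_mul_left hSi1 hSi2
      (Coalgebra.Repr.arbitrary ℂ φ)) m)
    simpa [b, hract_mul, hract_one, LinearMap.sum_apply, Algebra.algebraMap_eq_smul_one] using h
  have hRight : twistRight b.toLinearMap ∘ₗ twistRight ract = .id :=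
    twistRight_comp_twistRight hb_ract
  have hRight' : twistRight ract ∘ₗ twistRight b.toLinearMap = .id :=
    twistRight_comp_twistRight hract_b
  have hLeft : twistLeft act ∘ₗ twistLeft (act ∘ₗ Si) = .id := by
    refine twistLeft_comp_twistLeft fun m φ ↦ ?_
    have h := congr(act $(sum_right_mul_inverse_antipode_left hSi1 hSi2
      (Coalgebra.Repr.arbitrary ℂ φ)) m)
    rw [← (Coalgebra.Repr.arbitrary ℂ φ).eq]
    simpa [hact_mul, hact_one, LinearMap.sum_apply] using h
  have hLeft' : twistLeft (act ∘ₗ Si) ∘ₗ twistLeft act = .id := by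
    refine twistLeft_comp_twistLeft fun m φ ↦ ?_
    have h := congr(act $(sum_inverse_antipode_right_mul_left hSi1 hSi2
      (Coalgebra.Repr.arbitrary ℂ φ)) m)
    rw [← (Coalgebra.Repr.arbitrary ℂ φ).eq]
    simpa [hact_mul, hact_one, LinearMap.sum_apply] using h
  have hrel : ∀ z, opLeft hab (TensorProduct.comm ℂ M H (twistRight ract z)) =
      opRight hab (twistLeft act z) :=
    opLeft_comm_twistRight hab hb_ract hract_b hact_alg hract_alg
  have hf' : ∀ z, f (TensorProduct.comm ℂ M H z) =
      twistLeft act (twistRight b.toLinearMap z) := by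
    intro z
    induction z with
    | zero => simp
    | add x y hx hy => simp only [map_add, hx, hy]
    | tmul m φ => rw [twistLeft_twistRight, TensorProduct.comm_tmul, hf]; rfl
  have hg_tmul : ∀ m φ, TensorProduct.map
      (TensorProduct.lift act ∘ₗ TensorProduct.map Si (ract.flip m)) LinearMap.id
        (sweedlerShuffle H φ) = twistRight ract (twistLeft (act ∘ₗ Si) (m ⊗ₜ φ)) := by
    intro m φ
    rw [twistRight_twistLeft _ _ fun φ ψ m ↦ hcomm (Si φ) ψ m]
    congr 2
    ext x y
    rfl
  have hg' : ∀ z, g z =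
      TensorProduct.comm ℂ M H (twistRight ract (twistLeft (act ∘ₗ Si) z)) := by
    intro z
    induction z with
    | zero => simp
    | add x y hx hy => simp only [map_add, hx, hy]
    | tmul m φ => rw [hg, hg_tmul]
  have hmulR' : ∀ x y, mulR x y = opRight hab x y := by
    intro x y
    induction x with
    | zero => simp
    | add x x' hx hx' => simp only [map_add, LinearMap.add_apply, hx, hx']
    | tmul m φ =>
      induction y with
      | zero => simp
      | add y y' hy hy' => simp only [map_add, hy, hy']
      | tmul n ψ =>
        rw [hmulR, opRight_tmul, Module.End.mul_apply, diagonalRep_tmul]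
        generalize sweedlerShuffle H φ = t
        induction t with
        | zero => simp
        | add t t' ht ht' => simp only [map_add, ht, ht']
        | tmul s χ =>
          simp only [TensorProduct.map_tmul, leftMul_tmul]
          rfl
  have hop_f : ∀ x, opRight hab (f x) = opLeft hab x := by
    intro x
    obtain ⟨z, rfl⟩ := (TensorProduct.comm ℂ M H).surjective x
    rw [hf', ← hrel, ← LinearMap.comp_apply (twistRight ract), hRight', LinearMap.id_apply]
  have hop_one : ∀ x, opLeft hab x (1 ⊗ₜ 1) = f x := by
    intro x
    induction x with
    | zero => simp
    | add x x' hx hx' => simp only [map_add, LinearMap.add_apply, hx, hx']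
    | tmul φ m =>
      rw [opLeft_tmul, Module.End.mul_apply, leftMul_tmul, diagonalRep_tmul, hf, mul_one,
        LinearMap.mulRight_one]
      rfl
  have hop_mul : ∀ x y, opLeft hab (mulL x y) = opLeft hab x * opLeft hab y := by
    intro x y
    induction x with
    | zero => simp
    | add x x' hx hx' => simp only [map_add, LinearMap.add_apply, add_mul, hx, hx']
    | tmul φ m =>
      induction y with
      | zero => simp
      | add y y' hy hy' => simp only [map_add, mul_add, hy, hy']
      | tmul ψ n =>
        have hL : mulL (φ ⊗ₜ m) (ψ ⊗ₜ n) = TensorProduct.comm ℂ M H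
            (TensorProduct.map (LinearMap.mulRight ℂ n) (LinearMap.mulLeft ℂ φ)
              (twistRight ract (twistLeft (act ∘ₗ Si) (m ⊗ₜ ψ)))) := by
          rw [hmulL, ← hg_tmul, ← LinearMap.comp_apply
            (TensorProduct.map (LinearMap.mulRight ℂ n) (LinearMap.mulLeft ℂ φ)),
            ← TensorProduct.map_comp, LinearMap.comp_id]
        rw [hL, opLeft_comm_map_mul, hrel, ← LinearMap.comp_apply (twistLeft act), hLeft]
        simp [mul_assoc]
  have hgf : ∀ x, g (f x) = x := by
    intro x
    obtain ⟨z, rfl⟩ := (TensorProduct.comm ℂ M H).surjective x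
    rw [hf', hg', ← LinearMap.comp_apply (twistLeft _), hLeft', LinearMap.id_apply,
      ← LinearMap.comp_apply (twistRight _), hRight', LinearMap.id_apply]
  have hfg : ∀ y, f (g y) = y := by
    intro y
    rw [hg', hf', ← LinearMap.comp_apply (twistRight _), hRight, LinearMap.id_apply,
      ← LinearMap.comp_apply (twistLeft _), hLeft, LinearMap.id_apply]
  have hinj : Function.Injective (opLeft hab) := fun x y hxy ↦ by
    rw [← hgf x, ← hgf y, ← hop_one, ← hop_one, hxy]
  have hop_unit : opLeft hab (1 ⊗ₜ 1) = 1 := by simp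
  refine ⟨fun x y z ↦ hinj ?_, fun x ↦ hinj ?_, fun x ↦ hinj ?_, fun x y ↦ ?_, fun m ↦ ?_,
    hgf, hfg⟩
  · simp only [hop_mul, mul_assoc]
  · rw [hop_mul, hop_unit, one_mul]
  · rw [hop_mul, hop_unit, mul_one]
  · rw [hmulR', hop_f, ← hop_one, ← hop_one, hop_mul, Module.End.mul_apply]
  · rw [← hop_one]
    simp
end

section
/- Let G be a finite-dimensional Hopf algebra and (λ, ρ) a commuting pair of coactions on M, and let γ : M → A be an algebra morphism into a target algebra A. Then the relation γ_T(m ⋈ φ) := γ(m)·(φ ⊗ id)(T) gives a one-to-one correspondence between: (a) elements T ∈ G ⊗ A satisfying (ε ⊗ id)(T) = 1_A, T·λ_A(m) = ρ_A^op(m)·T for all m ∈ M, and T¹³T²³ = (Δ ⊗ id)(T); and (b) unital algebra maps γ_T : M ⋈ Ĝ → A extending γ. -/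
open TensorProduct

section ComulLift

variable {R H N P : Type*} [CommSemiring R] [AddCommMonoid H] [Module R H] [Coalgebra R H]
  [AddCommMonoid N] [Module R N] [AddCommMonoid P] [Module R P]

/-- The map `φ ↦ f φ₍₁₎ φ₍₂₎` attached to a bilinear map `f`. -/
noncomputable def comulLift : (H →ₗ[R] H →ₗ[R] N) →ₗ[R] H →ₗ[R] N :=
  LinearMap.lcomp R N (Coalgebra.comul (R := R) (A := H)) ∘ₗ
    (TensorProduct.lift.equiv (.id R) H H N).toLinearMap

theorem comulLift_apply (f : H →ₗ[R] H →ₗ[R] N) (φ : H) :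
    comulLift f φ = TensorProduct.lift f (Coalgebra.comul (R := R) φ) := rfl

theorem map_comulLift (g : N →ₗ[R] P) (f : H →ₗ[R] H →ₗ[R] N) (φ : H) :
    g (comulLift f φ) = comulLift (f.compr₂ g) φ := by
  rw [comulLift_apply, comulLift_apply, TensorProduct.lift_compr₂, LinearMap.comp_apply]

theorem comulLift_apply_apply (f : H →ₗ[R] H →ₗ[R] P →ₗ[R] N) (φ : H) (x : P) :
    comulLift f φ x = comulLift (f.compr₂ (LinearMap.applyₗ x)) φ :=
  map_comulLift (LinearMap.applyₗ x) f φ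

theorem comulLift_coassoc (f : H →ₗ[R] H →ₗ[R] H →ₗ[R] N) :
    comulLift (comulLift ∘ₗ f) = comulLift (comulLift f) := by
  have hl : TensorProduct.lift (comulLift ∘ₗ f) =
      TensorProduct.lift (TensorProduct.uncurry (.id R) H H N ∘ₗ f) ∘ₗ
        (Coalgebra.comul (R := R)).lTensor H := by
    ext; rfl
  have hr : TensorProduct.lift (comulLift f) =
      TensorProduct.lift (TensorProduct.uncurry (.id R) H H N ∘ₗ f) ∘ₗ
        (TensorProduct.assoc R H H H).toLinearMap ∘ₗ
        (Coalgebra.comul (R := R)).rTensor H := by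
    have key : ∀ z, (LinearMap.applyₗ z ∘ₗ TensorProduct.lift f : H ⊗[R] H →ₗ[R] N) =
        TensorProduct.lift (TensorProduct.uncurry (.id R) H H N ∘ₗ f) ∘ₗ
          (TensorProduct.assoc R H H H).toLinearMap ∘ₗ
          (TensorProduct.mk R (H ⊗[R] H) H).flip z := by
      intro z; ext; rfl
    ext x z
    exact LinearMap.congr_fun (key z) (Coalgebra.comul x)
  ext φ
  rw [comulLift_apply, comulLift_apply, hl, hr]
  simp only [LinearMap.comp_apply, LinearEquiv.coe_coe, Coalgebra.coassoc_apply]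

theorem comulLift_eq_of_counit_right {f : H →ₗ[R] H →ₗ[R] N} {k : H →ₗ[R] N}
    (h : ∀ x y, f x y = Coalgebra.counit (R := R) y • k x) : comulLift f = k := by
  have : TensorProduct.lift f = k ∘ₗ (TensorProduct.rid R H).toLinearMap ∘ₗ
      (Coalgebra.counit (R := R)).lTensor H := by
    ext x y; simp [h]
  ext φ
  simp [comulLift_apply, this]

theorem comulLift_eq_of_counit_left {f : H →ₗ[R] H →ₗ[R] N} {k : H →ₗ[R] N}
    (h : ∀ x y, f x y = Coalgebra.counit (R := R) x • k y) : comulLift f = k := by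
  have : TensorProduct.lift f = k ∘ₗ (TensorProduct.lid R H).toLinearMap ∘ₗ
      (Coalgebra.counit (R := R)).rTensor H := by
    ext x y; simp [h]
  ext φ
  simp [comulLift_apply, this]

end ComulLift

section InverseAntipode

variable {R H : Type*} [CommSemiring R] [Semiring H] [HopfAlgebra R H] {Si : H →ₗ[R] H}

theorem comulLift_inverseAntipode_mul
    (h₁ : ∀ x, Si (HopfAlgebra.antipode R x) = x) (h₂ : ∀ x, HopfAlgebra.antipode R (Si x) = x)
    (φ : H) :
    comulLift ((LinearMap.mul R H ∘ₗ Si).flip) φ = Coalgebra.counit (R := R) φ • (1 : H) := by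
  apply Function.LeftInverse.injective h₁
  rw [map_comulLift, map_smul, HopfAlgebra.antipode_one, ← Algebra.algebraMap_eq_smul_one,
    ← HopfAlgebra.mul_antipode_rTensor_comul_apply, comulLift_apply]
  generalize Coalgebra.comul (R := R) φ = c
  induction c with
  | zero => simp
  | add x y hx hy => simp only [map_add, hx, hy]
  | tmul x y => simp [HopfAlgebra.antipode_mul_antidistrib, h₂]

theorem comulLift_mul_inverseAntipode
    (h₁ : ∀ x, Si (HopfAlgebra.antipode R x) = x) (h₂ : ∀ x, HopfAlgebra.antipode R (Si x) = x)
    (φ : H) :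
    comulLift ((LinearMap.mul R H).flip ∘ₗ Si) φ = Coalgebra.counit (R := R) φ • (1 : H) := by
  apply Function.LeftInverse.injective h₁
  rw [map_comulLift, map_smul, HopfAlgebra.antipode_one, ← Algebra.algebraMap_eq_smul_one,
    ← HopfAlgebra.mul_antipode_lTensor_comul_apply, comulLift_apply]
  generalize Coalgebra.comul (R := R) φ = c
  induction c with
  | zero => simp
  | add x y hx hy => simp only [map_add, hx, hy]
  | tmul x y => simp [HopfAlgebra.antipode_mul_antidistrib, h₂]

end InverseAntipode

section Intertwiner

variable {R H M A : Type*} [CommSemiring R] [Semiring H] [HopfAlgebra R H]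
  [AddCommMonoid M] [Module R M] [Semiring A] [Algebra R A]

/-- The trilinear map `(φ₁, φ₂, φ₃) ↦ L φ₁ (n ◁ Si φ₃) * t φ₂`. -/
noncomputable def exchangeMap (Si : H →ₗ[R] H) (K : H →ₗ[R] M →ₗ[R] M) (L : H →ₗ[R] M →ₗ[R] A)
    (t : H →ₗ[R] A) (n : M) : H →ₗ[R] H →ₗ[R] H →ₗ[R] A :=
  LinearMap.mk₂ R (fun x y => LinearMap.mulRight R (t y) ∘ₗ L x ∘ₗ K.flip n ∘ₗ Si)
    (by intros; ext; simp [add_mul]) (by intros; ext; simp)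
    (by intros; ext; simp [mul_add]) (by intros; ext; simp)

@[simp]
theorem exchangeMap_apply (Si : H →ₗ[R] H) (K : H →ₗ[R] M →ₗ[R] M) (L : H →ₗ[R] M →ₗ[R] A)
    (t : H →ₗ[R] A) (n : M) (x y z : H) :
    exchangeMap Si K L t n x y z = L x (K (Si z) n) * t y := rfl

variable {Si : H →ₗ[R] H} {K : H →ₗ[R] M →ₗ[R] M} {L : H →ₗ[R] M →ₗ[R] A} {g : M →ₗ[R] A}
  {t : H →ₗ[R] A}

/-- The intertwiner relation `t φ₍₁₎ g(n ◁ φ₍₂₎) = L φ₍₁₎ n t φ₍₂₎` implies the exchange relation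
`t φ g(n) = L φ₍₁₎ (n ◁ Si φ₍₃₎) t φ₍₂₎`. -/
theorem exchange_of_intertwiner
    (h₁ : ∀ x, Si (HopfAlgebra.antipode R x) = x) (h₂ : ∀ x, HopfAlgebra.antipode R (Si x) = x)
    (hK_one : ∀ n, K 1 n = n) (hK_mul : ∀ φ ψ n, K ψ (K φ n) = K (φ * ψ) n)
    (h : ∀ n, comulLift ((LinearMap.mul R A).compl₁₂ t (g ∘ₗ K.flip n)) =
      comulLift ((LinearMap.mul R A).compl₁₂ (L.flip n) t)) (n : M) (φ : H) :
    comulLift (comulLift ∘ₗ exchangeMap Si K L t n) φ = t φ * g n := by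
  let f : H →ₗ[R] H →ₗ[R] H →ₗ[R] A :=
    { toFun x := (LinearMap.mul R H ∘ₗ Si).flip.compr₂
        (LinearMap.mulLeft R (t x) ∘ₗ g ∘ₗ K.flip n)
      map_add' := by intros; ext; simp [add_mul]
      map_smul' := by intros; ext; simp }
  have hf : comulLift (exchangeMap Si K L t n) = comulLift f := by
    ext y z
    rw [comulLift_apply_apply, comulLift_apply_apply]
    have hfz : f.compr₂ (LinearMap.applyₗ z) =
        (LinearMap.mul R A).compl₁₂ t (g ∘ₗ K.flip (K (Si z) n)) := by
      ext x y
      simp [f, hK_mul]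
    rw [hfz, h]
    rfl
  rw [comulLift_coassoc, hf, ← comulLift_coassoc]
  refine LinearMap.congr_fun (comulLift_eq_of_counit_right (k := LinearMap.mulRight R (g n) ∘ₗ t)
    fun x y => ?_) φ
  simp only [LinearMap.comp_apply]
  change comulLift ((LinearMap.mul R H ∘ₗ Si).flip.compr₂ _) y = _
  rw [← map_comulLift, comulLift_inverseAntipode_mul h₁ h₂]
  simp [hK_one]

/-- The exchange relation `t φ g(n) = L φ₍₁₎ (n ◁ Si φ₍₃₎) t φ₍₂₎` implies the intertwiner relation
`t φ₍₁₎ g(n ◁ φ₍₂₎) = L φ₍₁₎ n t φ₍₂₎`. -/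
theorem intertwiner_of_exchange
    (h₁ : ∀ x, Si (HopfAlgebra.antipode R x) = x) (h₂ : ∀ x, HopfAlgebra.antipode R (Si x) = x)
    (hK_one : ∀ n, K 1 n = n) (hK_mul : ∀ φ ψ n, K ψ (K φ n) = K (φ * ψ) n)
    (h : ∀ n φ, comulLift (comulLift ∘ₗ exchangeMap Si K L t n) φ = t φ * g n) (n : M) :
    comulLift ((LinearMap.mul R A).compl₁₂ t (g ∘ₗ K.flip n)) =
      comulLift ((LinearMap.mul R A).compl₁₂ (L.flip n) t) := by
  let f : H →ₗ[R] H →ₗ[R] H →ₗ[R] H →ₗ[R] A :=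
    LinearMap.mk₂ R (fun x y => ((LinearMap.mul R H).flip ∘ₗ Si).compr₂
        (LinearMap.mulRight R (t y) ∘ₗ L x ∘ₗ K.flip n))
      (by intros; ext; simp [add_mul]) (by intros; ext; simp)
      (by intros; ext; simp [mul_add]) (by intros; ext; simp)
  have hf : (LinearMap.mul R A).compl₁₂ t (g ∘ₗ K.flip n) = comulLift (comulLift ∘ₗ f) := by
    ext x w
    rw [comulLift_apply_apply]
    refine (h (K w n) x).symm.trans ?_
    congr 2
    ext x y
    simp only [LinearMap.comp_apply, LinearMap.compr₂_apply, LinearMap.applyₗ_apply_apply]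
    rw [comulLift_apply_apply]
    congr 2
    ext z v
    simp [f, hK_mul]
  rw [hf, ← comulLift_coassoc]
  congr 1
  ext x v
  simp only [LinearMap.comp_apply]
  rw [← comulLift_coassoc]
  refine LinearMap.congr_fun (comulLift_eq_of_counit_right
    (k := (LinearMap.mul R A).compl₁₂ (L.flip n) t x) fun y v => ?_) v
  simp only [LinearMap.comp_apply]
  change comulLift (((LinearMap.mul R H).flip ∘ₗ Si).compr₂ _) v = _
  rw [← map_comulLift, comulLift_mul_inverseAntipode h₁ h₂]
  simp [hK_one]

end Intertwiner

section Slice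

variable {R G H N P : Type*} [CommSemiring R] [AddCommMonoid G] [Module R G]
  [AddCommMonoid H] [Module R H] [AddCommMonoid N] [Module R N] [AddCommMonoid P] [Module R P]

/-- The map `G ⊗ N → Hom(H, N)`, `T ↦ (φ ↦ (φ ⊗ id)(T))`, induced by a pairing of `G` with `H`. -/
noncomputable def slice (p : G →ₗ[R] H →ₗ[R] R) : G ⊗[R] N →ₗ[R] H →ₗ[R] N :=
  dualTensorHom R H N ∘ₗ LinearMap.rTensor N p

@[simp]
theorem slice_tmul (p : G →ₗ[R] H →ₗ[R] R) (a : G) (n : N) (φ : H) :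
    slice p (a ⊗ₜ[R] n) φ = p a φ • n := by
  simp [slice]

theorem lid_map_flip (p : G →ₗ[R] H →ₗ[R] R) (T : G ⊗[R] N) (φ : H) :
    TensorProduct.lid R N (TensorProduct.map (p.flip φ) LinearMap.id T) = slice p T φ := by
  induction T with
  | zero => simp
  | add x y hx hy => simp only [map_add, hx, hy, LinearMap.add_apply]
  | tmul x y => simp

theorem slice_map (p : G →ₗ[R] H →ₗ[R] R) (f : N →ₗ[R] P) (T : G ⊗[R] N) (φ : H) :
    slice p (TensorProduct.map LinearMap.id f T) φ = f (slice p T φ) := by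
  induction T with
  | zero => simp
  | add x y hx hy => simp only [map_add, hx, hy, LinearMap.add_apply]
  | tmul x y => simp

theorem slice_comm_map (p : G →ₗ[R] H →ₗ[R] R) (f : N →ₗ[R] P) (T : N ⊗[R] G) (φ : H) :
    slice p (TensorProduct.comm R P G (TensorProduct.map f LinearMap.id T)) φ =
      f (TensorProduct.rid R N (TensorProduct.map LinearMap.id (p.flip φ) T)) := by
  induction T with
  | zero => simp
  | add x y hx hy => simp only [map_add, hx, hy, LinearMap.add_apply]
  | tmul x y => simp

end Slice

theorem slice_bijective {k G H : Type*} (N : Type*) [Field k] [AddCommGroup G] [Module k G]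
    [AddCommGroup H] [Module k H] [AddCommGroup N] [Module k N] [FiniteDimensional k G]
    [FiniteDimensional k H] {p : G →ₗ[k] H →ₗ[k] k}
    (hG : ∀ a, (∀ φ, p a φ = 0) → a = 0) (hH : ∀ φ, (∀ a, p a φ = 0) → φ = 0) :
    Function.Bijective (slice (N := N) p) := by
  have hp : p.IsPerfPair := by
    refine .of_injective ?_ ?_
    · exact (injective_iff_map_eq_zero p).2 fun a ha => hG a fun φ => by simp [ha]
    · exact (injective_iff_map_eq_zero p.flip).2 fun φ hφ => hH φ fun a => by
        simpa using LinearMap.congr_fun hφ a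
  have hr : Function.Bijective (LinearMap.rTensor N p) :=
    (LinearEquiv.rTensor N (LinearEquiv.ofBijective p hp.bijective_left)).bijective
  exact dualTensorHom_bijective.comp hr

section HopfPairing

variable {R G H A : Type*} [CommSemiring R] [Semiring G] [Bialgebra R G] [Semiring H]
  [Bialgebra R H] [Semiring A] [Algebra R A] {p : G →ₗ[R] H →ₗ[R] R}

theorem slice_mul
    (hp : ∀ a b φ, p (a * b) φ =
      LinearMap.mul' R R (TensorProduct.map (p a) (p b) (Coalgebra.comul (R := R) φ)))
    (S T : G ⊗[R] A) :
    slice p (S * T) = comulLift ((LinearMap.mul R A).compl₁₂ (slice p S) (slice p T)) := by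
  ext φ
  induction S with
  | zero =>
    have : (LinearMap.mul R A).compl₁₂ (0 : H →ₗ[R] A) (slice p T) = 0 := by ext; simp
    simp [this]
  | add x y hx hy =>
    simp only [add_mul, map_add, LinearMap.add_apply, hx, hy, comulLift_apply]
    simp only [← LinearMap.add_apply, ← map_add]
    congr 2
    ext
    simp
  | tmul a x =>
    induction T with
    | zero =>
      have : (LinearMap.mul R A).compl₁₂ (slice p (a ⊗ₜ[R] x)) (0 : H →ₗ[R] A) = 0 := by
        ext; simp
      simp [this]
    | add x y hx hy =>
      simp only [mul_add, map_add, LinearMap.add_apply, hx, hy, comulLift_apply]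
      simp only [← LinearMap.add_apply, ← map_add]
      congr 2
      ext
      simp [mul_add]
    | tmul b y =>
      rw [Algebra.TensorProduct.tmul_mul_tmul, slice_tmul, hp, comulLift_apply]
      generalize Coalgebra.comul (R := R) φ = c
      induction c with
      | zero => simp
      | add c d hc hd => simp only [map_add, add_smul, hc, hd]
      | tmul c d => simp [smul_smul, mul_comm]

theorem slice_slice_comul {N : Type*} [AddCommMonoid N] [Module R N]
    (hp : ∀ a φ ψ, p a (φ * ψ) =
      LinearMap.mul' R R (TensorProduct.map (p.flip φ) (p.flip ψ) (Coalgebra.comul (R := R) a)))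
    (T : G ⊗[R] N) (φ ψ : H) :
    slice p (slice p (TensorProduct.assoc R G G N
      (TensorProduct.map (Coalgebra.comul (R := R)) LinearMap.id T)) φ) ψ =
      slice p T (φ * ψ) := by
  induction T with
  | zero => simp
  | add x y hx hy => simp only [map_add, hx, hy, LinearMap.add_apply]
  | tmul a x =>
    rw [slice_tmul, hp, TensorProduct.map_tmul]
    generalize Coalgebra.comul (R := R) a = c
    induction c with
    | zero => simp
    | add c d hc hd => simp only [map_add, add_smul, TensorProduct.add_tmul, hc, hd,
        LinearMap.add_apply]
    | tmul c d => simp [smul_smul]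

theorem slice_mul_one_tmul {B : Type*} [Semiring B] [Algebra R B] (S : G ⊗[R] B) (b : B)
    (φ : H) : slice p (S * (1 ⊗ₜ[R] b)) φ = slice p S φ * b := by
  induction S with
  | zero => simp
  | add x y hx hy => simp only [add_mul, map_add, hx, hy, LinearMap.add_apply]
  | tmul a x => simp

theorem slice_one_tmul_mul {B : Type*} [Semiring B] [Algebra R B] (S : G ⊗[R] B) (b : B)
    (φ : H) : slice p ((1 ⊗ₜ[R] b) * S) φ = b * slice p S φ := by
  induction S with
  | zero => simp
  | add x y hx hy => simp only [mul_add, map_add, hx, hy, LinearMap.add_apply]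
  | tmul a x => simp

theorem slice_slice_leg_mul_leg (T : G ⊗[R] A) (φ ψ : H) :
    slice p (slice p (TensorProduct.map LinearMap.id (TensorProduct.mk R G A 1) T *
      ((1 : G) ⊗ₜ[R] T)) φ) ψ = slice p T φ * slice p T ψ := by
  rw [slice_mul_one_tmul, slice_map, TensorProduct.mk_apply, slice_one_tmul_mul]

theorem lid_map_counit (hp : ∀ a, p a 1 = Coalgebra.counit (R := R) a) (T : G ⊗[R] A) :
    TensorProduct.lid R A (TensorProduct.map (Coalgebra.counit (R := R)) LinearMap.id T) =
      slice p T 1 := by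
  rw [← lid_map_flip]
  congr 3
  ext a
  exact (hp a).symm

end HopfPairing

theorem apply_sweedlerShuffle {H N : Type*} [Ring H] [HopfAlgebra ℂ H] [AddCommMonoid N]
    [Module ℂ N] (F : (H ⊗[ℂ] H) ⊗[ℂ] H →ₗ[ℂ] N) (f : H →ₗ[ℂ] H →ₗ[ℂ] H →ₗ[ℂ] N)
    (hf : ∀ x y z, f x y z = F ((x ⊗ₜ z) ⊗ₜ y)) (φ : H) :
    F (sweedlerShuffle H φ) = comulLift (comulLift ∘ₗ f) φ := by
  have h : TensorProduct.lift (comulLift ∘ₗ f) =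
      F ∘ₗ (TensorProduct.assoc ℂ H H H).symm.toLinearMap ∘ₗ
        TensorProduct.map LinearMap.id (TensorProduct.comm ℂ H H).toLinearMap ∘ₗ
        TensorProduct.map LinearMap.id (Coalgebra.comul (R := ℂ)) := by
    ext x v
    simp only [TensorProduct.AlgebraTensorModule.curry_apply, LinearMap.restrictScalars_self,
      TensorProduct.curry_apply, TensorProduct.lift.tmul, LinearMap.comp_apply, comulLift_apply,
      TensorProduct.map_tmul, LinearMap.id_apply]
    generalize Coalgebra.comul (R := ℂ) v = c
    induction c with
    | zero => simp
    | add c d hc hd => simp only [map_add, TensorProduct.tmul_add, hc, hd]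
    | tmul c d => simp [hf]
  rw [comulLift_apply, h]
  rfl

/-- Let `G` be a finite-dimensional Hopf algebra with dual `Ĝ = H` (encoded
by a perfect Hopf pairing `p`), let `(λ, ρ)` be a commuting pair of coactions on `M`, and let
`γ : M → A` be an algebra morphism.  Then the relation `γ_T(m ⋈ φ) := γ(m)·(φ ⊗ id)(T)` gives
a one-to-one correspondence between (a) normal elements `T ∈ G ⊗ A` satisfying the
`λρ`-intertwiner property and the coherence property `T¹³T²³ = (Δ ⊗ id)(T)`, and (b) unital
algebra maps `γ_T : M ⋈ Ĝ → A` extending `γ`. -/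
theorem statement10
    (G H M A : Type*) [Ring G] [HopfAlgebra ℂ G] [Ring H] [HopfAlgebra ℂ H]
    [Ring M] [Algebra ℂ M] [Ring A] [Algebra ℂ A]
    [FiniteDimensional ℂ G] [FiniteDimensional ℂ H]
    -- inverse antipode of `Ĝ = H`
    (SiH : H →ₗ[ℂ] H)
    (hSiH1 : ∀ x : H, SiH (HopfAlgebra.antipode (R := ℂ) x) = x)
    (hSiH2 : ∀ x : H, HopfAlgebra.antipode (R := ℂ) (SiH x) = x)
    -- inverse antipode of `G`
    (SiG : G →ₗ[ℂ] G)
    (hSiG1 : ∀ x : G, SiG (HopfAlgebra.antipode (R := ℂ) x) = x)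
    (hSiG2 : ∀ x : G, HopfAlgebra.antipode (R := ℂ) (SiG x) = x)
    -- the Hopf pairing `⟨·|·⟩ : G ⊗ Ĝ → ℂ`
    (p : G →ₗ[ℂ] H →ₗ[ℂ] ℂ)
    (hp_mulG : ∀ (a b : G) (φ : H),
      p (a * b) φ =
        LinearMap.mul' ℂ ℂ (TensorProduct.map (p a) (p b) (Coalgebra.comul (R := ℂ) φ)))
    (hp_oneG : ∀ φ : H, p 1 φ = Coalgebra.counit (R := ℂ) φ)
    (hp_mulH : ∀ (a : G) (φ ψ : H),
      p a (φ * ψ) =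
        LinearMap.mul' ℂ ℂ
          (TensorProduct.map (p.flip φ) (p.flip ψ) (Coalgebra.comul (R := ℂ) a)))
    (hp_oneH : ∀ a : G, p a 1 = Coalgebra.counit (R := ℂ) a)
    (hp_antipode : ∀ (a : G) (φ : H),
      p (HopfAlgebra.antipode (R := ℂ) a) φ = p a (HopfAlgebra.antipode (R := ℂ) φ))
    (hp_nondegG : ∀ a : G, (∀ φ : H, p a φ = 0) → a = 0)
    (hp_nondegH : ∀ φ : H, (∀ a : G, p a φ = 0) → φ = 0)
    -- the commuting pair of coactions `(λ, ρ)` on `M`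
    (lam : M →ₐ[ℂ] G ⊗[ℂ] M)
    (hlam_coassoc : ∀ m : M,
      TensorProduct.map LinearMap.id lam.toLinearMap (lam m) =
        (TensorProduct.assoc ℂ G G M)
          (TensorProduct.map (Coalgebra.comul (R := ℂ)) LinearMap.id (lam m)))
    (hlam_counit : ∀ m : M,
      (TensorProduct.lid ℂ M)
        (TensorProduct.map (Coalgebra.counit (R := ℂ)) LinearMap.id (lam m)) = m)
    (rho : M →ₐ[ℂ] M ⊗[ℂ] G)
    (hrho_coassoc : ∀ m : M,
      (TensorProduct.assoc ℂ M G G)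
          (TensorProduct.map rho.toLinearMap LinearMap.id (rho m)) =
        TensorProduct.map LinearMap.id (Coalgebra.comul (R := ℂ)) (rho m))
    (hrho_counit : ∀ m : M,
      (TensorProduct.rid ℂ M)
        (TensorProduct.map LinearMap.id (Coalgebra.counit (R := ℂ)) (rho m)) = m)
    (hcomm : ∀ m : M,
      (TensorProduct.assoc ℂ G M G)
          (TensorProduct.map lam.toLinearMap LinearMap.id (rho m)) =
        TensorProduct.map LinearMap.id rho.toLinearMap (lam m))
    -- the dual actions `▷ = actL` (dual to `ρ`) and `◁ = actR` (dual to `λ`) of `Ĝ` on `M`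
    (actL : H →ₗ[ℂ] M →ₗ[ℂ] M)
    (h_actL : ∀ (φ : H) (m : M),
      actL φ m =
        (TensorProduct.rid ℂ M)
          (TensorProduct.map LinearMap.id (p.flip φ) (rho m)))
    (actR : H →ₗ[ℂ] M →ₗ[ℂ] M)
    (h_actR : ∀ (φ : H) (m : M),
      actR φ m =
        (TensorProduct.lid ℂ M)
          (TensorProduct.map (p.flip φ) LinearMap.id (lam m)))
    -- the diagonal crossed product `M ⋈ Ĝ` with
    -- `(m ⋈ φ)(n ⋈ ψ) = m(φ₁ ▷ n ◁ Ŝ⁻¹(φ₃)) ⋈ φ₂ψ`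
    (mulMH : M ⊗[ℂ] H →ₗ[ℂ] M ⊗[ℂ] H →ₗ[ℂ] M ⊗[ℂ] H)
    (hmulMH : ∀ (m n : M) (φ ψ : H),
      mulMH (m ⊗ₜ[ℂ] φ) (n ⊗ₜ[ℂ] ψ) =
        TensorProduct.map
          (LinearMap.mulLeft ℂ m ∘ₗ TensorProduct.lift actL ∘ₗ
            TensorProduct.map LinearMap.id (actR.flip n ∘ₗ SiH))
          (LinearMap.mulRight ℂ ψ) (sweedlerShuffle H φ))
    -- the algebra map `γ : M → A`
    (γ : M →ₐ[ℂ] A) :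
    -- (a) every normal coherent `λρ`-intertwiner `T` determines a unique algebra map
    --     `γ_T` extending `γ` via `γ_T(m ⋈ φ) = γ(m)·(φ ⊗ id)(T)` ...
    (∀ T : G ⊗[ℂ] A,
      ((TensorProduct.lid ℂ A)
          (TensorProduct.map (Coalgebra.counit (R := ℂ)) LinearMap.id T) = 1 ∧
       (∀ m : M,
         T * TensorProduct.map LinearMap.id γ.toLinearMap (lam m) =
           (TensorProduct.comm ℂ A G)
               (TensorProduct.map γ.toLinearMap LinearMap.id (rho m)) * T) ∧
       TensorProduct.map LinearMap.id (TensorProduct.mk ℂ G A (1 : G)) T *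
           ((1 : G) ⊗ₜ[ℂ] T) =
         (TensorProduct.assoc ℂ G G A)
           (TensorProduct.map (Coalgebra.comul (R := ℂ)) LinearMap.id T)) →
      ∃! γT : M ⊗[ℂ] H →ₗ[ℂ] A,
        ((∀ x y : M ⊗[ℂ] H, γT (mulMH x y) = γT x * γT y) ∧
         γT ((1 : M) ⊗ₜ[ℂ] (1 : H)) = 1 ∧
         (∀ m : M, γT (m ⊗ₜ[ℂ] (1 : H)) = γ m)) ∧
        (∀ (m : M) (φ : H),
          γT (m ⊗ₜ[ℂ] φ) =
            γ m *
              (TensorProduct.lid ℂ A)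
                (TensorProduct.map (p.flip φ) LinearMap.id T))) ∧
    -- (b) ... and conversely every unital algebra map `γ_T` extending `γ` arises this way
    --     from a unique normal coherent `λρ`-intertwiner `T`.
    (∀ γT : M ⊗[ℂ] H →ₗ[ℂ] A,
      ((∀ x y : M ⊗[ℂ] H, γT (mulMH x y) = γT x * γT y) ∧
       γT ((1 : M) ⊗ₜ[ℂ] (1 : H)) = 1 ∧
       (∀ m : M, γT (m ⊗ₜ[ℂ] (1 : H)) = γ m)) →
      ∃! T : G ⊗[ℂ] A,
        ((TensorProduct.lid ℂ A)
            (TensorProduct.map (Coalgebra.counit (R := ℂ)) LinearMap.id T) = 1 ∧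
         (∀ m : M,
           T * TensorProduct.map LinearMap.id γ.toLinearMap (lam m) =
             (TensorProduct.comm ℂ A G)
                 (TensorProduct.map γ.toLinearMap LinearMap.id (rho m)) * T) ∧
         TensorProduct.map LinearMap.id (TensorProduct.mk ℂ G A (1 : G)) T *
             ((1 : G) ⊗ₜ[ℂ] T) =
           (TensorProduct.assoc ℂ G G A)
             (TensorProduct.map (Coalgebra.comul (R := ℂ)) LinearMap.id T)) ∧
        (∀ (m : M) (φ : H),
          γT (m ⊗ₜ[ℂ] φ) =
            γ m *
              (TensorProduct.lid ℂ A)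
                (TensorProduct.map (p.flip φ) LinearMap.id T))) := by
  have hactR (φ : H) (m : M) : actR φ m = slice p (lam m) φ := by
    rw [h_actR, lid_map_flip]
  have hactR_one (n : M) : actR 1 n = n := by
    rw [hactR, ← lid_map_counit hp_oneH, hlam_counit]
  have hactR_mul (φ ψ : H) (n : M) : actR ψ (actR φ n) = actR (φ * ψ) n := by
    rw [hactR ψ, hactR φ, hactR (φ * ψ), ← slice_slice_comul hp_mulH, ← hlam_coassoc, slice_map]
    rfl
  have hactL_unit (φ : H) : actL φ 1 = Coalgebra.counit (R := ℂ) φ • (1 : M) := by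
    simp [h_actL, Algebra.TensorProduct.one_def, hp_oneG]
  have hactR_unit (φ : H) : actR φ 1 = Coalgebra.counit (R := ℂ) φ • (1 : M) := by
    simp [h_actR, Algebra.TensorProduct.one_def, hp_oneG]
  have hSi_one : SiH 1 = 1 := by simpa using hSiH1 1
  have hSi_counit (z : H) : Coalgebra.counit (R := ℂ) (SiH z) = Coalgebra.counit (R := ℂ) z := by
    rw [← HopfAlgebra.counit_antipode (R := ℂ) (SiH z), hSiH2]
  have hbij : Function.Bijective (slice (N := A) p) :=
    slice_bijective A hp_nondegG hp_nondegH
  have hbij₂ : Function.Bijective (slice (N := G ⊗[ℂ] A) p) :=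
    slice_bijective (G ⊗[ℂ] A) hp_nondegG hp_nondegH
  let L : H →ₗ[ℂ] M →ₗ[ℂ] A := actL.compr₂ γ.toLinearMap
  have hmul (Q : M ⊗[ℂ] H →ₗ[ℂ] A) (m n : M) (φ ψ : H) (f : H →ₗ[ℂ] H →ₗ[ℂ] H →ₗ[ℂ] A)
      (hf : ∀ x y z, f x y z = Q ((m * actL x (actR (SiH z) n)) ⊗ₜ (y * ψ))) :
      Q (mulMH (m ⊗ₜ φ) (n ⊗ₜ ψ)) = comulLift (comulLift ∘ₗ f) φ := by
    rw [hmulMH, ← LinearMap.comp_apply]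
    exact apply_sweedlerShuffle _ f (fun x y z => by simp [hf]) φ
  have hintertwine (T : G ⊗[ℂ] A) (m : M) :
      T * TensorProduct.map LinearMap.id γ.toLinearMap (lam m) =
          (TensorProduct.comm ℂ A G)
            (TensorProduct.map γ.toLinearMap LinearMap.id (rho m)) * T ↔
        comulLift ((LinearMap.mul ℂ A).compl₁₂ (slice p T) (γ.toLinearMap ∘ₗ actR.flip m)) =
          comulLift ((LinearMap.mul ℂ A).compl₁₂ (L.flip m) (slice p T)) := by
    have hR : slice p (TensorProduct.map LinearMap.id γ.toLinearMap (lam m)) =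
        γ.toLinearMap ∘ₗ actR.flip m := by
      ext φ
      rw [slice_map, ← hactR]
      rfl
    have hL : slice p ((TensorProduct.comm ℂ A G)
        (TensorProduct.map γ.toLinearMap LinearMap.id (rho m))) = L.flip m := by
      ext φ
      rw [slice_comm_map, ← h_actL]
      rfl
    rw [← hbij.1.eq_iff, slice_mul hp_mulG, slice_mul hp_mulG, hR, hL]
  have hcoherent (T : G ⊗[ℂ] A) :
      TensorProduct.map LinearMap.id (TensorProduct.mk ℂ G A (1 : G)) T * ((1 : G) ⊗ₜ[ℂ] T) =
          (TensorProduct.assoc ℂ G G A)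
            (TensorProduct.map (Coalgebra.comul (R := ℂ)) LinearMap.id T) ↔
        ∀ φ ψ, slice p T (φ * ψ) = slice p T φ * slice p T ψ := by
    simp_rw [← slice_slice_comul hp_mulH, ← slice_slice_leg_mul_leg]
    refine ⟨fun h φ ψ => by rw [h], fun h => hbij₂.1 (LinearMap.ext fun φ =>
      hbij.1 (LinearMap.ext fun ψ => (h φ ψ).symm))⟩
  simp_rw [lid_map_counit hp_oneH, hintertwine, hcoherent, lid_map_flip]
  constructor
  · rintro T ⟨hT_one, hT_int, hT_mul⟩
    have hexch := exchange_of_intertwiner hSiH1 hSiH2 hactR_one hactR_mul hT_int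
    let Q : M ⊗[ℂ] H →ₗ[ℂ] A :=
      TensorProduct.lift ((LinearMap.mul ℂ A).compl₁₂ γ.toLinearMap (slice p T))
    have hQ (m : M) (φ : H) : Q (m ⊗ₜ φ) = γ m * slice p T φ := rfl
    refine ⟨Q, ⟨⟨fun x y => ?_, by simp [hQ, hT_one], fun m => by simp [hQ, hT_one]⟩, hQ⟩, ?_⟩
    · induction x with
      | zero => simp
      | add x x' hx hx' => simp only [map_add, LinearMap.add_apply, add_mul, hx, hx']
      | tmul m φ =>
        induction y with
        | zero => simp
        | add y y' hy hy' => simp only [map_add, mul_add, hy, hy']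
        | tmul n ψ =>
          let Z : A →ₗ[ℂ] A :=
            LinearMap.mulLeft ℂ (γ m) ∘ₗ LinearMap.mulRight ℂ (slice p T ψ)
          let f : H →ₗ[ℂ] H →ₗ[ℂ] H →ₗ[ℂ] A :=
            exchangeMap SiH actR (L.compr₂ (LinearMap.mulLeft ℂ (γ m)))
              (LinearMap.mulRight ℂ (slice p T ψ) ∘ₗ slice p T) n
          have hf : (comulLift ∘ₗ exchangeMap SiH actR L (slice p T) n).compr₂ Z =
              comulLift ∘ₗ f := by
            ext x v
            simp only [LinearMap.compr₂_apply, LinearMap.comp_apply, map_comulLift]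
            congr 2
            ext y z
            simp [f, Z, mul_assoc]
          rw [hmul Q m n φ ψ f fun x y z => by simp [f, L, hQ, hT_mul, mul_assoc], ← hf,
            ← map_comulLift, hexch]
          simp [Z, hQ, mul_assoc]
    · rintro Q' ⟨-, hQ'⟩
      exact TensorProduct.ext' fun m φ => by rw [hQ', hQ]
  · rintro Q ⟨hQ_mul, hQ_one, hQ_ext⟩
    obtain ⟨T, hT⟩ := hbij.2 (Q ∘ₗ TensorProduct.mk ℂ M H 1)
    have ht (φ : H) : slice p T φ = Q (1 ⊗ₜ φ) := by rw [hT]; rfl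
    have hQ (m : M) (φ : H) : Q (m ⊗ₜ φ) = γ m * slice p T φ := by
      rw [ht, ← hQ_ext, ← hQ_mul, hmulMH]
      simp [sweedlerShuffle, Algebra.TensorProduct.one_def, hSi_one, hactR_one, hactL_unit]
    have hT_one : slice p T 1 = 1 := by rw [ht, hQ_one]
    refine ⟨T, ⟨⟨hT_one, intertwiner_of_exchange hSiH1 hSiH2 hactR_one hactR_mul fun n φ => ?_,
      fun φ ψ => ?_⟩, hQ⟩, ?_⟩
    · rw [← hmul Q 1 n φ 1 _ fun x y z => by simp [L, hQ], hQ_mul, hQ_ext, ht]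
      rfl
    · rw [ht φ, ht ψ, ← hQ_mul, hmul Q 1 1 φ ψ
        (exchangeMap SiH actR L (slice p T ∘ₗ LinearMap.mulRight ℂ ψ) 1)
        fun x y z => by simp [L, hQ]]
      refine (LinearMap.congr_fun (comulLift_eq_of_counit_left
        (k := slice p T ∘ₗ LinearMap.mulRight ℂ ψ) fun x v => ?_) φ).symm
      refine LinearMap.congr_fun (comulLift_eq_of_counit_right
        (k := Coalgebra.counit (R := ℂ) x • (slice p T ∘ₗ LinearMap.mulRight ℂ ψ))
        fun y z => ?_) v
      simp [L, hactR_unit, hactL_unit, hSi_counit]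
    · rintro T' ⟨-, hT'⟩
      refine hbij.1 (LinearMap.ext fun φ => ?_)
      rw [ht, hT', map_one, one_mul]
end

section
/- Let (M, Δ_M, ε_M) be a bialgebra and (λ, ρ) a commuting pair of left and right G-coactions on M over a Hopf algebra G. Then the compatibility condition (ρ ⊗ id_M) ∘ Δ_M = (id_M ⊗ λ) ∘ Δ_M holds if and only if κ := (id_G ⊗ ε_M) ∘ λ = (ε_M ⊗ id_G) ∘ ρ is a well-defined bialgebra homomorphism κ : M → G satisfying λ = (κ ⊗ id_M) ∘ Δ_M and ρ = (id_M ⊗ κ) ∘ Δ_M. -/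
open TensorProduct

section Contraction

variable {R A B C D : Type*} [CommSemiring R]
  [AddCommMonoid A] [AddCommMonoid B] [AddCommMonoid C] [AddCommMonoid D]
  [Module R A] [Module R B] [Module R C] [Module R D]

/-- Contracting the right tensor factor commutes with reassociation. -/
lemma map_id_rid_comp_assoc (φ : C →ₗ[R] R) (t : (A ⊗[R] B) ⊗[R] C) :
    map LinearMap.id ((TensorProduct.rid R B).toLinearMap ∘ₗ map LinearMap.id φ)
      (TensorProduct.assoc R A B C t) =
    TensorProduct.rid R (A ⊗[R] B) (map LinearMap.id φ t) := by
  induction t with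
  | zero => simp
  | add x y hx hy => simp only [map_add, hx, hy]
  | tmul x c =>
    induction x with
    | zero => simp
    | add x y hx hy => simp only [add_tmul, map_add, hx, hy]
    | tmul a b => simp

/-- Contracting the left tensor factor commutes with reassociation. -/
lemma lid_map_assoc (φ : A →ₗ[R] R) (t : (A ⊗[R] B) ⊗[R] C) :
    TensorProduct.lid R (B ⊗[R] C) (map φ LinearMap.id (TensorProduct.assoc R A B C t)) =
    map ((TensorProduct.lid R B).toLinearMap ∘ₗ map φ LinearMap.id) LinearMap.id t := by
  induction t with
  | zero => simp
  | add x y hx hy => simp only [map_add, hx, hy]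
  | tmul x c =>
    induction x with
    | zero => simp
    | add x y hx hy => simp only [add_tmul, map_add, hx, hy]
    | tmul a b => simp [smul_tmul']

lemma rid_map_map (f : A →ₗ[R] B) (φ : C →ₗ[R] R) (t : A ⊗[R] C) :
    TensorProduct.rid R B (map LinearMap.id φ (map f LinearMap.id t)) =
    f (TensorProduct.rid R A (map LinearMap.id φ t)) := by
  induction t with
  | zero => simp
  | add x y hx hy => simp only [map_add, hx, hy]
  | tmul a c => simp

lemma lid_map_map (f : A →ₗ[R] B) (φ : C →ₗ[R] R) (t : C ⊗[R] A) :
    TensorProduct.lid R B (map φ LinearMap.id (map LinearMap.id f t)) =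
    f (TensorProduct.lid R A (map φ LinearMap.id t)) := by
  induction t with
  | zero => simp
  | add x y hx hy => simp only [map_add, hx, hy]
  | tmul a c => simp

lemma contract_rid_eq_contract_lid (φ : A →ₗ[R] R) (ψ : B →ₗ[R] R) (t : A ⊗[R] B) :
    φ (TensorProduct.rid R A (map LinearMap.id ψ t)) =
    ψ (TensorProduct.lid R B (map φ LinearMap.id t)) := by
  induction t with
  | zero => simp
  | add x y hx hy => simp only [map_add, hx, hy]
  | tmul a c => simp [mul_comm]

lemma map_map_id_eq (f : A →ₗ[R] C) (g : B →ₗ[R] D) (t : A ⊗[R] B) :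
    map LinearMap.id g (map f LinearMap.id t) = map f g t := by
  rw [map_map]; simp

lemma assoc_map_map_id (f : B →ₗ[R] D) (t : (A ⊗[R] B) ⊗[R] C) :
    TensorProduct.assoc R A D C (map (map LinearMap.id f) LinearMap.id t) =
    map LinearMap.id (map f LinearMap.id) (TensorProduct.assoc R A B C t) := by
  induction t with
  | zero => simp
  | add x y hx hy => simp only [map_add, hx, hy]
  | tmul x c =>
    induction x with
    | zero => simp
    | add x y hx hy => simp only [add_tmul, map_add, hx, hy]
    | tmul a b => simp

end Contraction

section Counit

variable {R M : Type*} [CommSemiring R] [AddCommMonoid M] [Module R M] [Coalgebra R M]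

lemma rid_map_counit_comul (m : M) :
    TensorProduct.rid R M (map LinearMap.id (Coalgebra.counit (R := R))
      (Coalgebra.comul (R := R) m)) = m := by
  have h := Coalgebra.lTensor_counit_comul (R := R) m
  rw [LinearMap.lTensor] at h
  simp [h]

lemma lid_map_counit_comul (m : M) :
    TensorProduct.lid R M (map (Coalgebra.counit (R := R)) LinearMap.id
      (Coalgebra.comul (R := R) m)) = m := by
  have h := Coalgebra.rTensor_counit_comul (R := R) m
  rw [LinearMap.rTensor] at h
  simp [h]

end Counit

/-- Let `(M, Δ_M, ε_M)` be a bialgebra and `(λ, ρ)` a commuting pair of left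
and right `G`-coactions on `M` over a Hopf algebra `G`.  Then the compatibility condition
`(ρ ⊗ id) ∘ Δ_M = (id ⊗ λ) ∘ Δ_M` holds iff `κ := (id ⊗ ε_M) ∘ λ = (ε_M ⊗ id) ∘ ρ` is a
well-defined bialgebra homomorphism `κ : M → G` satisfying `λ = (κ ⊗ id) ∘ Δ_M` and
`ρ = (id ⊗ κ) ∘ Δ_M`. -/
theorem statement11
    (G M : Type*) [Ring G] [HopfAlgebra ℂ G] [Ring M] [Bialgebra ℂ M]
    -- left coaction `λ`
    (lam : M →ₐ[ℂ] G ⊗[ℂ] M)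
    (hlam_coassoc : ∀ m : M,
      TensorProduct.map LinearMap.id lam.toLinearMap (lam m) =
        (TensorProduct.assoc ℂ G G M)
          (TensorProduct.map (Coalgebra.comul (R := ℂ)) LinearMap.id (lam m)))
    (hlam_counit : ∀ m : M,
      (TensorProduct.lid ℂ M)
        (TensorProduct.map (Coalgebra.counit (R := ℂ)) LinearMap.id (lam m)) = m)
    -- right coaction `ρ`
    (rho : M →ₐ[ℂ] M ⊗[ℂ] G)
    (hrho_coassoc : ∀ m : M,
      (TensorProduct.assoc ℂ M G G)
          (TensorProduct.map rho.toLinearMap LinearMap.id (rho m)) =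
        TensorProduct.map LinearMap.id (Coalgebra.comul (R := ℂ)) (rho m))
    (hrho_counit : ∀ m : M,
      (TensorProduct.rid ℂ M)
        (TensorProduct.map LinearMap.id (Coalgebra.counit (R := ℂ)) (rho m)) = m)
    -- `λ` and `ρ` commute
    (hcomm : ∀ m : M,
      (TensorProduct.assoc ℂ G M G)
          (TensorProduct.map lam.toLinearMap LinearMap.id (rho m)) =
        TensorProduct.map LinearMap.id rho.toLinearMap (lam m)) :
    -- compatibility `(ρ ⊗ id_M) ∘ Δ_M = (id_M ⊗ λ) ∘ Δ_M` ...
    (∀ m : M,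
      (TensorProduct.assoc ℂ M G M)
          (TensorProduct.map rho.toLinearMap LinearMap.id (Coalgebra.comul (R := ℂ) m)) =
        TensorProduct.map LinearMap.id lam.toLinearMap (Coalgebra.comul (R := ℂ) m)) ↔
    -- ... iff `κ` is a well-defined bialgebra map with `λ = (κ ⊗ id) ∘ Δ_M`,
    -- `ρ = (id ⊗ κ) ∘ Δ_M`; here
    -- `κλ := (id_G ⊗ ε_M) ∘ λ` and `κρ := (ε_M ⊗ id_G) ∘ ρ`.
    (((TensorProduct.rid ℂ G).toLinearMap ∘ₗ
        TensorProduct.map LinearMap.id (Coalgebra.counit (R := ℂ)) ∘ₗ lam.toLinearMap) =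
      ((TensorProduct.lid ℂ G).toLinearMap ∘ₗ
        TensorProduct.map (Coalgebra.counit (R := ℂ)) LinearMap.id ∘ₗ rho.toLinearMap) ∧
     (∀ m n : M,
       ((TensorProduct.rid ℂ G).toLinearMap ∘ₗ
          TensorProduct.map LinearMap.id (Coalgebra.counit (R := ℂ)) ∘ₗ lam.toLinearMap)
            (m * n) =
        ((TensorProduct.rid ℂ G).toLinearMap ∘ₗ
          TensorProduct.map LinearMap.id (Coalgebra.counit (R := ℂ)) ∘ₗ lam.toLinearMap) m *
        ((TensorProduct.rid ℂ G).toLinearMap ∘ₗ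
          TensorProduct.map LinearMap.id (Coalgebra.counit (R := ℂ)) ∘ₗ lam.toLinearMap) n) ∧
     ((TensorProduct.rid ℂ G).toLinearMap ∘ₗ
        TensorProduct.map LinearMap.id (Coalgebra.counit (R := ℂ)) ∘ₗ lam.toLinearMap)
          (1 : M) = 1 ∧
     (∀ m : M,
       Coalgebra.comul (R := ℂ)
          (((TensorProduct.rid ℂ G).toLinearMap ∘ₗ
            TensorProduct.map LinearMap.id (Coalgebra.counit (R := ℂ)) ∘ₗ
              lam.toLinearMap) m) =
        TensorProduct.map
          ((TensorProduct.rid ℂ G).toLinearMap ∘ₗ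
            TensorProduct.map LinearMap.id (Coalgebra.counit (R := ℂ)) ∘ₗ lam.toLinearMap)
          ((TensorProduct.rid ℂ G).toLinearMap ∘ₗ
            TensorProduct.map LinearMap.id (Coalgebra.counit (R := ℂ)) ∘ₗ lam.toLinearMap)
          (Coalgebra.comul (R := ℂ) m)) ∧
     (∀ m : M,
       Coalgebra.counit (R := ℂ)
          (((TensorProduct.rid ℂ G).toLinearMap ∘ₗ
            TensorProduct.map LinearMap.id (Coalgebra.counit (R := ℂ)) ∘ₗ
              lam.toLinearMap) m) =
        (Coalgebra.counit (R := ℂ) m : ℂ)) ∧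
     (∀ m : M,
       lam m =
         TensorProduct.map
           ((TensorProduct.rid ℂ G).toLinearMap ∘ₗ
             TensorProduct.map LinearMap.id (Coalgebra.counit (R := ℂ)) ∘ₗ lam.toLinearMap)
           LinearMap.id (Coalgebra.comul (R := ℂ) m)) ∧
     (∀ m : M,
       rho m =
         TensorProduct.map LinearMap.id
           ((TensorProduct.rid ℂ G).toLinearMap ∘ₗ
             TensorProduct.map LinearMap.id (Coalgebra.counit (R := ℂ)) ∘ₗ lam.toLinearMap)
           (Coalgebra.comul (R := ℂ) m))) := by
  let κ : M →ₐ[ℂ] G := (Algebra.TensorProduct.rid ℂ ℂ G).toAlgHom.comp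
    ((Algebra.TensorProduct.map (AlgHom.id ℂ G) (Bialgebra.counitAlgHom ℂ M)).comp lam)
  have hκ : (TensorProduct.rid ℂ G).toLinearMap ∘ₗ
      map LinearMap.id (Coalgebra.counit (R := ℂ)) ∘ₗ lam.toLinearMap = κ.toLinearMap := rfl
  have hκ_apply (m : M) : TensorProduct.rid ℂ G
      (map LinearMap.id (Coalgebra.counit (R := ℂ)) (lam m)) = κ m := rfl
  rw [hκ]
  constructor
  · intro h
    have hrho (m : M) :
        rho m = map LinearMap.id κ.toLinearMap (Coalgebra.comul (R := ℂ) m) := by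
      have e := congrArg (map LinearMap.id ((TensorProduct.rid ℂ G).toLinearMap ∘ₗ
        map LinearMap.id (Coalgebra.counit (R := ℂ)))) (h m)
      rw [map_id_rid_comp_assoc, rid_map_map, rid_map_counit_comul, map_map] at e
      exact e
    have hlam (m : M) : lam m = map ((TensorProduct.lid ℂ G).toLinearMap ∘ₗ
        map (Coalgebra.counit (R := ℂ)) LinearMap.id ∘ₗ rho.toLinearMap) LinearMap.id
          (Coalgebra.comul (R := ℂ) m) := by
      have e := congrArg (fun t => TensorProduct.lid ℂ (G ⊗[ℂ] M)
        (map (Coalgebra.counit (R := ℂ)) LinearMap.id t)) (h m)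
      rw [lid_map_assoc, lid_map_map, lid_map_counit_comul, map_map] at e
      exact e.symm
    have hκρ : κ.toLinearMap = (TensorProduct.lid ℂ G).toLinearMap ∘ₗ
        map (Coalgebra.counit (R := ℂ)) LinearMap.id ∘ₗ rho.toLinearMap := by
      ext m
      rw [AlgHom.toLinearMap_apply, ← hκ_apply, hlam, rid_map_map, rid_map_counit_comul]
    rw [← hκρ] at hlam
    refine ⟨hκρ, map_mul κ, map_one κ, fun m => ?_, fun m => ?_, hlam, hrho⟩
    · have e := congrArg (map LinearMap.id ((TensorProduct.rid ℂ G).toLinearMap ∘ₗ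
        map LinearMap.id (Coalgebra.counit (R := ℂ)))) (hlam_coassoc m)
      rw [map_id_rid_comp_assoc, rid_map_map, hκ_apply, map_map] at e
      refine e.symm.trans ?_
      rw [hlam]
      exact map_map_id_eq κ.toLinearMap κ.toLinearMap _
    · rw [AlgHom.toLinearMap_apply, ← hκ_apply, contract_rid_eq_contract_lid, hlam_counit]
  · rintro ⟨-, -, -, -, -, hlam, hrho⟩ m
    have hlam' : lam.toLinearMap = map κ.toLinearMap LinearMap.id ∘ₗ Coalgebra.comul :=
      LinearMap.ext hlam
    have hrho' : rho.toLinearMap = map LinearMap.id κ.toLinearMap ∘ₗ Coalgebra.comul :=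
      LinearMap.ext hrho
    have hcoassoc := Coalgebra.coassoc_apply (R := ℂ) m
    rw [LinearMap.rTensor, LinearMap.lTensor] at hcoassoc
    have e := assoc_map_map_id κ.toLinearMap
      (map Coalgebra.comul LinearMap.id (Coalgebra.comul (R := ℂ) m))
    rw [hcoassoc, map_map, map_map] at e
    rw [hlam', hrho']
    exact e
end

section
/- Let G be a finite-dimensional Hopf algebra, M a bialgebra with a commuting pair of G-coactions (λ, ρ) satisfying λ = (κ ⊗ id) ∘ Δ_M and ρ = (id ⊗ κ) ∘ Δ_M for a bialgebra map κ : M → G. Then on the diagonal crossed product B := M ⋈ Ĝ, the maps Δ_B(m ⋈ ψ) := (m^(1) ⋈ ψ₍₂₎) ⊗ (m^(2) ⋈ ψ₍₁₎) and ε_B(m ⋈ ψ) := ε_M(m)ε̂(ψ) are algebra homomorphisms Δ_B : B → B ⊗ B and ε_B : B → ℂ. -/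
open TensorProduct

open Coalgebra (comul counit coassoc_apply coassoc_symm_apply lTensor_counit_comul)

section Slice

variable {R C : Type*} [CommSemiring R] [AddCommMonoid C] [Module R C] [Coalgebra R C]

/-- Convolution on the left by a functional: `c ↦ f(c₍₁₎) c₍₂₎`. -/
noncomputable def leftSlice (f : C →ₗ[R] R) : C →ₗ[R] C :=
  (TensorProduct.lid R C).toLinearMap ∘ₗ f.rTensor C ∘ₗ comul

/-- Convolution on the right by a functional: `c ↦ c₍₁₎ g(c₍₂₎)`. -/
noncomputable def rightSlice (g : C →ₗ[R] R) : C →ₗ[R] C :=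
  (TensorProduct.rid R C).toLinearMap ∘ₗ g.lTensor C ∘ₗ comul

theorem leftSlice_counit : leftSlice (counit : C →ₗ[R] R) = LinearMap.id := by
  ext c
  simp [leftSlice]

theorem comul_leftSlice (f : C →ₗ[R] R) (c : C) :
    comul (R := R) (leftSlice f c) = (leftSlice f).rTensor C (comul c) := by
  have h₁ : (TensorProduct.lid R (C ⊗[R] C)).toLinearMap ∘ₗ f.rTensor (C ⊗[R] C) ∘ₗ
      (TensorProduct.assoc R C C C).toLinearMap =
      ((TensorProduct.lid R C).toLinearMap ∘ₗ f.rTensor C).rTensor C := by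
    ext x y z
    simp [smul_tmul']
  have h₂ : (TensorProduct.lid R (C ⊗[R] C)).toLinearMap ∘ₗ f.rTensor (C ⊗[R] C) ∘ₗ
      (comul (R := R) (A := C)).lTensor C =
      comul ∘ₗ (TensorProduct.lid R C).toLinearMap ∘ₗ f.rTensor C := by
    ext x y
    simp
  have h₃ : leftSlice f = ((TensorProduct.lid R C).toLinearMap ∘ₗ f.rTensor C) ∘ₗ comul := rfl
  rw [h₃, LinearMap.rTensor_comp, ← h₁]
  have h₄ := LinearMap.congr_fun h₂ (comul (R := R) c)
  simp only [LinearMap.comp_apply, LinearEquiv.coe_coe] at h₄ ⊢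
  rw [coassoc_apply, h₄]

theorem comul_rightSlice (g : C →ₗ[R] R) (c : C) :
    comul (R := R) (rightSlice g c) = (rightSlice g).lTensor C (comul c) := by
  have h₁ : (TensorProduct.rid R (C ⊗[R] C)).toLinearMap ∘ₗ g.lTensor (C ⊗[R] C) ∘ₗ
      (TensorProduct.assoc R C C C).symm.toLinearMap =
      ((TensorProduct.rid R C).toLinearMap ∘ₗ g.lTensor C).lTensor C := by
    ext x y z
    simp [tmul_smul]
  have h₂ : (TensorProduct.rid R (C ⊗[R] C)).toLinearMap ∘ₗ g.lTensor (C ⊗[R] C) ∘ₗ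
      (comul (R := R) (A := C)).rTensor C =
      comul ∘ₗ (TensorProduct.rid R C).toLinearMap ∘ₗ g.lTensor C := by
    ext x y
    simp
  have h₃ : rightSlice g = ((TensorProduct.rid R C).toLinearMap ∘ₗ g.lTensor C) ∘ₗ comul := rfl
  rw [h₃, LinearMap.lTensor_comp, ← h₁]
  have h₄ := LinearMap.congr_fun h₂ (comul (R := R) c)
  simp only [LinearMap.comp_apply, LinearEquiv.coe_coe] at h₄ ⊢
  rw [coassoc_symm_apply, h₄]

theorem rTensor_rightSlice_comul (g : C →ₗ[R] R) (c : C) :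
    (rightSlice g).rTensor C (comul (R := R) c) = (leftSlice g).lTensor C (comul c) := by
  have h : ((TensorProduct.lid R C).toLinearMap ∘ₗ g.rTensor C).lTensor C ∘ₗ
      (TensorProduct.assoc R C C C).toLinearMap =
      ((TensorProduct.rid R C).toLinearMap ∘ₗ g.lTensor C).rTensor C := by
    ext x y z
    simp [smul_tmul]
  have h₁ : leftSlice g = ((TensorProduct.lid R C).toLinearMap ∘ₗ g.rTensor C) ∘ₗ comul := rfl
  have h₂ : rightSlice g = ((TensorProduct.rid R C).toLinearMap ∘ₗ g.lTensor C) ∘ₗ comul := rfl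
  rw [h₁, h₂, LinearMap.lTensor_comp, LinearMap.rTensor_comp, ← h]
  simp only [LinearMap.comp_apply, LinearEquiv.coe_coe]
  rw [coassoc_apply]

theorem rightSlice_leftSlice (f g : C →ₗ[R] R) (c : C) :
    rightSlice g (leftSlice f c) = leftSlice f (rightSlice g c) := by
  have h : (TensorProduct.rid R C).toLinearMap ∘ₗ g.lTensor C ∘ₗ (leftSlice f).rTensor C =
      leftSlice f ∘ₗ (TensorProduct.rid R C).toLinearMap ∘ₗ g.lTensor C := by
    ext x y
    simp
  have hcomul := LinearMap.congr_fun h (comul (R := R) c)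
  simp only [LinearMap.comp_apply, LinearEquiv.coe_coe, ← comul_leftSlice] at hcomul
  exact hcomul

theorem leftSlice_leftSlice (f g : C →ₗ[R] R) (c : C) :
    leftSlice f (leftSlice g c) = leftSlice (f ∘ₗ leftSlice g) c := by
  change TensorProduct.lid R C (f.rTensor C (comul (R := R) (leftSlice g c))) = _
  rw [comul_leftSlice, ← LinearMap.comp_apply (f.rTensor C), ← LinearMap.rTensor_comp]
  rfl

theorem counit_leftSlice (f : C →ₗ[R] R) (c : C) :
    counit (R := R) (leftSlice f c) = f c := by
  have h : counit (R := R) ∘ₗ (TensorProduct.lid R C).toLinearMap ∘ₗ f.rTensor C =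
      f ∘ₗ (TensorProduct.rid R C).toLinearMap ∘ₗ (counit (R := R) (A := C)).lTensor C := by
    ext x y
    simp [mul_comm]
  have hcomul := LinearMap.congr_fun h (comul (R := R) c)
  simp only [LinearMap.comp_apply, LinearEquiv.coe_coe, lTensor_counit_comul, rid_tmul,
    one_smul] at hcomul
  exact hcomul

/-- Conjugation by a convolution-invertible functional respects the comultiplication. -/
theorem comul_rightSlice_leftSlice {f g : C →ₗ[R] R} (h : f ∘ₗ leftSlice g = counit) (c : C) :
    comul (R := R) (rightSlice g (leftSlice f c)) =
      TensorProduct.map (rightSlice g ∘ₗ leftSlice f) (rightSlice g ∘ₗ leftSlice f)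
        (comul c) := by
  have hcomm : rightSlice g ∘ₗ leftSlice f = leftSlice f ∘ₗ rightSlice g :=
    LinearMap.ext (rightSlice_leftSlice f g)
  have hinv : leftSlice f ∘ₗ leftSlice g = LinearMap.id := by
    ext c
    rw [LinearMap.comp_apply, leftSlice_leftSlice, h, leftSlice_counit]
  have hmap : TensorProduct.map (rightSlice g ∘ₗ leftSlice f) (rightSlice g ∘ₗ leftSlice f) =
      (rightSlice g).lTensor C ∘ₗ (leftSlice f).rTensor C ∘ₗ
        (leftSlice f).lTensor C ∘ₗ (rightSlice g).rTensor C := by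
    nth_rewrite 1 [hcomm]
    ext x y
    simp
  rw [hmap]
  simp only [LinearMap.comp_apply]
  rw [rTensor_rightSlice_comul, ← LinearMap.lTensor_comp_apply, hinv,
    LinearMap.lTensor_id, LinearMap.id_apply, comul_rightSlice, comul_leftSlice]

/-- Conjugation by a convolution-invertible functional respects the counit. -/
theorem counit_rightSlice_leftSlice {f g : C →ₗ[R] R} (h : f ∘ₗ rightSlice g = counit) (c : C) :
    counit (R := R) (rightSlice g (leftSlice f c)) = counit (R := R) c := by
  rw [rightSlice_leftSlice, counit_leftSlice, ← h, LinearMap.comp_apply]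

end Slice

/-- The co-opposite coalgebra structure, with comultiplication `c ↦ c₍₂₎ ⊗ c₍₁₎`. -/
@[reducible] noncomputable def cooppositeCoalgebra (R C : Type*) [CommSemiring R]
    [AddCommMonoid C] [Module R C] [Coalgebra R C] : Coalgebra R C where
  comul := (TensorProduct.comm R C C).toLinearMap ∘ₗ comul
  counit := counit
  coassoc := by
    have h₁ : (TensorProduct.assoc R C C C).toLinearMap ∘ₗ
        ((TensorProduct.comm R C C).toLinearMap ∘ₗ comul).rTensor C ∘ₗ
        (TensorProduct.comm R C C).toLinearMap =
        (TensorProduct.assoc R C C C).toLinearMap ∘ₗ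
        (TensorProduct.comm R C C).toLinearMap.rTensor C ∘ₗ
        (TensorProduct.comm R C (C ⊗[R] C)).toLinearMap ∘ₗ
        (comul (R := R) (A := C)).lTensor C := by
      ext x y
      simp
    have h₂ : ((TensorProduct.comm R C C).toLinearMap ∘ₗ comul).lTensor C ∘ₗ
        (TensorProduct.comm R C C).toLinearMap =
        (TensorProduct.comm R C C).toLinearMap.lTensor C ∘ₗ
        (TensorProduct.comm R (C ⊗[R] C) C).toLinearMap ∘ₗ
        (comul (R := R) (A := C)).rTensor C := by
      ext x y
      simp
    have h₃ : (TensorProduct.assoc R C C C).toLinearMap ∘ₗ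
        (TensorProduct.comm R C C).toLinearMap.rTensor C ∘ₗ
        (TensorProduct.comm R C (C ⊗[R] C)).toLinearMap ∘ₗ
        (TensorProduct.assoc R C C C).toLinearMap =
        (TensorProduct.comm R C C).toLinearMap.lTensor C ∘ₗ
        (TensorProduct.comm R (C ⊗[R] C) C).toLinearMap := by
      ext x y z
      simp
    ext c
    have e₁ := LinearMap.congr_fun h₁ (comul (R := R) c)
    have e₂ := LinearMap.congr_fun h₂ (comul (R := R) c)
    have e₃ := LinearMap.congr_fun h₃ ((comul (R := R)).rTensor C (comul (R := R) c))
    simp only [LinearMap.comp_apply, LinearEquiv.coe_coe, coassoc_apply] at e₁ e₂ e₃ ⊢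
    rw [e₁, e₂, e₃]
  rTensor_counit_comp_comul := by
    have h : (counit (R := R) (A := C)).rTensor C ∘ₗ (TensorProduct.comm R C C).toLinearMap =
        (TensorProduct.comm R C R).toLinearMap ∘ₗ (counit (R := R) (A := C)).lTensor C := by
      ext x y
      simp
    rw [← LinearMap.comp_assoc, h]
    ext c
    simp
  lTensor_counit_comp_comul := by
    have h : (counit (R := R) (A := C)).lTensor C ∘ₗ (TensorProduct.comm R C C).toLinearMap =
        (TensorProduct.comm R R C).toLinearMap ∘ₗ (counit (R := R) (A := C)).rTensor C := by
      ext x y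
      simp
    rw [← LinearMap.comp_assoc, h]
    ext c
    simp

section TensorCoopposite

variable {R M H : Type*} [CommSemiring R] [AddCommMonoid M] [Module R M] [Coalgebra R M]
  [AddCommMonoid H] [Module R H] [Coalgebra R H]

variable (R M H) in
/-- The tensor product of a coalgebra with the co-opposite of another one. -/
@[reducible] noncomputable def tensorCoopposite : Coalgebra R (M ⊗[R] H) :=
  letI := cooppositeCoalgebra R H
  TensorProduct.instCoalgebra

theorem tensorCoopposite_comul_tmul (m : M) (φ : H) :
    (tensorCoopposite R M H).comul (m ⊗ₜ[R] φ) =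
      TensorProduct.tensorTensorTensorComm R M M H H
        (comul m ⊗ₜ[R] TensorProduct.comm R H H (comul φ)) :=
  rfl

theorem tensorCoopposite_counit_tmul (m : M) (φ : H) :
    (tensorCoopposite R M H).counit (m ⊗ₜ[R] φ) = counit (R := R) m * counit (R := R) φ :=
  mul_comm _ _

theorem tensorCoopposite_comul_repr {ι ι' : Type*} {m : M} {φ : H}
    (r : Coalgebra.Repr R m ι) (s : Coalgebra.Repr R φ ι') :
    (tensorCoopposite R M H).comul (m ⊗ₜ[R] φ) = ∑ i ∈ r.index, ∑ j ∈ s.index,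
      (r.left i ⊗ₜ[R] s.right j) ⊗ₜ[R] (r.right i ⊗ₜ[R] s.left j) := by
  rw [tensorCoopposite_comul_tmul, ← r.eq, ← s.eq]
  simp only [map_sum, sum_tmul, tmul_sum, TensorProduct.comm_tmul,
    TensorProduct.tensorTensorTensorComm_tmul]
  exact Finset.sum_comm

theorem tensorCoopposite_leftSlice_tmul {ι ι' : Type*} {m : M} {φ : H}
    (r : Coalgebra.Repr R m ι) (s : Coalgebra.Repr R φ ι') (f : M ⊗[R] H →ₗ[R] R) :
    letI := tensorCoopposite R M H
    leftSlice f (m ⊗ₜ[R] φ) = ∑ i ∈ r.index, ∑ j ∈ s.index,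
      f (r.left i ⊗ₜ[R] s.right j) • (r.right i ⊗ₜ[R] s.left j) := by
  change TensorProduct.lid R _ (f.rTensor _ ((tensorCoopposite R M H).comul (m ⊗ₜ[R] φ))) = _
  rw [tensorCoopposite_comul_repr r s]
  simp only [map_sum, LinearMap.rTensor_tmul, TensorProduct.lid_tmul]

theorem tensorCoopposite_rightSlice_tmul {ι ι' : Type*} {m : M} {φ : H}
    (r : Coalgebra.Repr R m ι) (s : Coalgebra.Repr R φ ι') (g : M ⊗[R] H →ₗ[R] R) :
    letI := tensorCoopposite R M H
    rightSlice g (m ⊗ₜ[R] φ) = ∑ i ∈ r.index, ∑ j ∈ s.index,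
      g (r.right i ⊗ₜ[R] s.left j) • (r.left i ⊗ₜ[R] s.right j) := by
  change TensorProduct.rid R _ (g.lTensor _ ((tensorCoopposite R M H).comul (m ⊗ₜ[R] φ))) = _
  rw [tensorCoopposite_comul_repr r s]
  simp only [map_sum, LinearMap.lTensor_tmul, TensorProduct.rid_tmul]

end TensorCoopposite

section InverseAntipode

variable {R H : Type*} [CommSemiring R] [Semiring H] [HopfAlgebra R H] {Si : H →ₗ[R] H}

open HopfAlgebra in
/-- The inverse antipode satisfies `φ₍₂₎ S⁻¹(φ₍₁₎) = ε(φ)`. -/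
theorem sum_right_mul_inverse_antipode_left (h₁ : ∀ x : H, Si (antipode R x) = x)
    (h₂ : ∀ x : H, antipode R (Si x) = x) {ι : Type*} {φ : H} (s : Coalgebra.Repr R φ ι) :
    ∑ j ∈ s.index, s.right j * Si (s.left j) = counit (R := R) φ • 1 := by
  apply Function.LeftInverse.injective h₁
  simp only [map_sum, antipode_mul_antidistrib, h₂, map_smul, antipode_one,
    sum_mul_antipode_eq_smul]

open HopfAlgebra in
/-- The inverse antipode satisfies `S⁻¹(φ₍₂₎) φ₍₁₎ = ε(φ)`. -/
theorem sum_inverse_antipode_right_mul_left (h₁ : ∀ x : H, Si (antipode R x) = x)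
    (h₂ : ∀ x : H, antipode R (Si x) = x) {ι : Type*} {φ : H} (s : Coalgebra.Repr R φ ι) :
    ∑ j ∈ s.index, Si (s.right j) * s.left j = counit (R := R) φ • 1 := by
  apply Function.LeftInverse.injective h₁
  simp only [map_sum, antipode_mul_antidistrib, h₂, map_smul, antipode_one,
    sum_antipode_mul_eq_smul]

end InverseAntipode

section Pairing

variable {R M H : Type*} [CommSemiring R] [AddCommMonoid M] [Module R M] [Coalgebra R M]
  [Semiring H] [HopfAlgebra R H] {Si : H →ₗ[R] H} {B : M →ₗ[R] H →ₗ[R] R}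

open HopfAlgebra in
theorem pairing_comp_leftSlice (h₁ : ∀ x : H, Si (antipode R x) = x)
    (h₂ : ∀ x : H, antipode R (Si x) = x)
    (hmul : ∀ (m : M) (φ ψ : H), B m (φ * ψ) =
      LinearMap.mul' R R (TensorProduct.map (B.flip φ) (B.flip ψ) (comul m)))
    (hone : ∀ m : M, B m 1 = counit m) :
    letI := tensorCoopposite R M H
    TensorProduct.lift (B.compl₂ Si) ∘ₗ leftSlice (TensorProduct.lift B) =
      (tensorCoopposite R M H).counit := by
  refine TensorProduct.ext' fun m φ ↦ ?_
  let r := Coalgebra.Repr.arbitrary R m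
  let s := Coalgebra.Repr.arbitrary R φ
  have hB (φ ψ : H) : ∑ i ∈ r.index, B (r.left i) φ * B (r.right i) ψ = B m (φ * ψ) := by
    rw [hmul, ← r.eq]
    simp
  rw [LinearMap.comp_apply, tensorCoopposite_leftSlice_tmul r s, tensorCoopposite_counit_tmul]
  simp only [map_sum, map_smul, TensorProduct.lift.tmul, LinearMap.compl₂_apply, smul_eq_mul]
  rw [Finset.sum_comm]
  simp only [hB, ← map_sum, sum_right_mul_inverse_antipode_left h₁ h₂, map_smul, hone,
    smul_eq_mul, mul_comm]

open HopfAlgebra in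
theorem pairing_comp_rightSlice (h₁ : ∀ x : H, Si (antipode R x) = x)
    (h₂ : ∀ x : H, antipode R (Si x) = x)
    (hmul : ∀ (m : M) (φ ψ : H), B m (φ * ψ) =
      LinearMap.mul' R R (TensorProduct.map (B.flip φ) (B.flip ψ) (comul m)))
    (hone : ∀ m : M, B m 1 = counit m) :
    letI := tensorCoopposite R M H
    TensorProduct.lift (B.compl₂ Si) ∘ₗ rightSlice (TensorProduct.lift B) =
      (tensorCoopposite R M H).counit := by
  refine TensorProduct.ext' fun m φ ↦ ?_
  let r := Coalgebra.Repr.arbitrary R m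
  let s := Coalgebra.Repr.arbitrary R φ
  have hB (φ ψ : H) : ∑ i ∈ r.index, B (r.right i) ψ * B (r.left i) φ = B m (φ * ψ) := by
    rw [hmul, ← r.eq]
    simp [mul_comm]
  rw [LinearMap.comp_apply, tensorCoopposite_rightSlice_tmul r s, tensorCoopposite_counit_tmul]
  simp only [map_sum, map_smul, TensorProduct.lift.tmul, LinearMap.compl₂_apply, smul_eq_mul]
  rw [Finset.sum_comm]
  simp only [hB, ← map_sum, sum_inverse_antipode_right_mul_left h₁ h₂, map_smul, hone,
    smul_eq_mul, mul_comm]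

end Pairing

/-- Coassociativity rewrites the Sweedler shuffle through `(Δ ⊗ id) ∘ Δ`. -/
theorem map_sweedlerShuffle {H M : Type*} [Ring H] [HopfAlgebra ℂ H] [AddCommMonoid M]
    [Module ℂ M] (L : H →ₗ[ℂ] M →ₗ[ℂ] M) (Q : H →ₗ[ℂ] M) {ι : Type*} {φ : H}
    (s : Coalgebra.Repr ℂ φ ι) :
    TensorProduct.map (TensorProduct.lift L ∘ₗ TensorProduct.map LinearMap.id Q) LinearMap.id
        (sweedlerShuffle H φ) =
      ∑ j ∈ s.index, TensorProduct.map (L.flip (Q (s.right j))) LinearMap.id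
        (comul (R := ℂ) (s.left j)) := by
  have hshuffle : sweedlerShuffle H φ = (TensorProduct.assoc ℂ H H H).symm
      ((TensorProduct.comm ℂ H H).toLinearMap.lTensor H
        (TensorProduct.assoc ℂ H H H ((comul (R := ℂ)).rTensor H (comul φ)))) := by
    rw [coassoc_apply]
    rfl
  have hslice (z : H) (w : H ⊗[ℂ] H) :
      TensorProduct.map (TensorProduct.lift L ∘ₗ TensorProduct.map LinearMap.id Q) LinearMap.id
        ((TensorProduct.assoc ℂ H H H).symm ((TensorProduct.comm ℂ H H).toLinearMap.lTensor H
          (TensorProduct.assoc ℂ H H H (w ⊗ₜ[ℂ] z)))) =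
      TensorProduct.map (L.flip (Q z)) LinearMap.id w := by
    induction w with
    | zero => simp
    | tmul x y => simp
    | add x y hx hy => simp only [add_tmul, map_add, hx, hy]
  rw [hshuffle, ← s.eq]
  simp only [map_sum, LinearMap.rTensor_tmul, hslice]

section PairingTwist

variable {H M : Type*} [Ring H] [HopfAlgebra ℂ H]

section Coalgebra

variable [AddCommMonoid M] [Module ℂ M] [Coalgebra ℂ M]

/-- The map `n ⊗ φ ↦ B(n₍₁₎, Si φ₍₃₎) B(n₍₃₎, φ₍₁₎) n₍₂₎ ⊗ φ₍₂₎`. -/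
noncomputable def pairingTwist (B : M →ₗ[ℂ] H →ₗ[ℂ] ℂ) (Si : H →ₗ[ℂ] H) :
    M ⊗[ℂ] H →ₗ[ℂ] M ⊗[ℂ] H :=
  letI := tensorCoopposite ℂ M H
  rightSlice (TensorProduct.lift B) ∘ₗ leftSlice (TensorProduct.lift (B.compl₂ Si))

theorem pairingTwist_tmul {B : M →ₗ[ℂ] H →ₗ[ℂ] ℂ} {Si : H →ₗ[ℂ] H}
    {actL actR : H →ₗ[ℂ] M →ₗ[ℂ] M}
    (hactL : ∀ (φ : H) (m : M), actL φ m =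
      TensorProduct.rid ℂ M (TensorProduct.map LinearMap.id (B.flip φ) (comul m)))
    (hactR : ∀ (φ : H) (m : M), actR φ m =
      TensorProduct.lid ℂ M (TensorProduct.map (B.flip φ) LinearMap.id (comul m)))
    (n : M) (φ : H) :
    pairingTwist B Si (n ⊗ₜ[ℂ] φ) =
      TensorProduct.map
        (TensorProduct.lift actL ∘ₗ TensorProduct.map LinearMap.id (actR.flip n ∘ₗ Si))
        LinearMap.id (sweedlerShuffle H φ) := by
  have hright (n : M) (φ : H) :
      letI := tensorCoopposite ℂ M H
      rightSlice (TensorProduct.lift B) (n ⊗ₜ[ℂ] φ) =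
        TensorProduct.map (actL.flip n) LinearMap.id (comul (R := ℂ) φ) := by
    let r := Coalgebra.Repr.arbitrary ℂ n
    let s := Coalgebra.Repr.arbitrary ℂ φ
    rw [tensorCoopposite_rightSlice_tmul r s, ← s.eq]
    simp only [map_sum, TensorProduct.map_tmul, LinearMap.flip_apply, hactL, ← r.eq,
      sum_tmul, TensorProduct.rid_tmul, LinearMap.id_apply, TensorProduct.lift.tmul,
      smul_tmul']
    exact Finset.sum_comm
  let r := Coalgebra.Repr.arbitrary ℂ n
  let s := Coalgebra.Repr.arbitrary ℂ φ
  have hleft :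
      letI := tensorCoopposite ℂ M H
      leftSlice (TensorProduct.lift (B.compl₂ Si)) (n ⊗ₜ[ℂ] φ) =
        ∑ j ∈ s.index, (actR.flip n ∘ₗ Si) (s.right j) ⊗ₜ[ℂ] s.left j := by
    rw [tensorCoopposite_leftSlice_tmul r s]
    simp only [LinearMap.comp_apply, map_sum, TensorProduct.map_tmul, LinearMap.flip_apply,
      hactR, ← r.eq, sum_tmul, TensorProduct.lid_tmul, LinearMap.id_apply,
      TensorProduct.lift.tmul, smul_tmul', LinearMap.compl₂_apply]
    exact Finset.sum_comm
  rw [map_sweedlerShuffle _ _ s, pairingTwist, LinearMap.comp_apply, hleft, map_sum]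
  exact Finset.sum_congr rfl fun j _ ↦ hright _ _

variable {B : M →ₗ[ℂ] H →ₗ[ℂ] ℂ} {Si : H →ₗ[ℂ] H}

theorem comul_pairingTwist (h₁ : ∀ x : H, Si (HopfAlgebra.antipode ℂ x) = x)
    (h₂ : ∀ x : H, HopfAlgebra.antipode ℂ (Si x) = x)
    (hmul : ∀ (m : M) (φ ψ : H), B m (φ * ψ) =
      LinearMap.mul' ℂ ℂ (TensorProduct.map (B.flip φ) (B.flip ψ) (comul m)))
    (hone : ∀ m : M, B m 1 = counit m) (x : M ⊗[ℂ] H) :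
    (tensorCoopposite ℂ M H).comul (pairingTwist B Si x) =
      TensorProduct.map (pairingTwist B Si) (pairingTwist B Si)
        ((tensorCoopposite ℂ M H).comul x) :=
  letI := tensorCoopposite ℂ M H
  comul_rightSlice_leftSlice (pairing_comp_leftSlice h₁ h₂ hmul hone) x

theorem counit_pairingTwist (h₁ : ∀ x : H, Si (HopfAlgebra.antipode ℂ x) = x)
    (h₂ : ∀ x : H, HopfAlgebra.antipode ℂ (Si x) = x)
    (hmul : ∀ (m : M) (φ ψ : H), B m (φ * ψ) =
      LinearMap.mul' ℂ ℂ (TensorProduct.map (B.flip φ) (B.flip ψ) (comul m)))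
    (hone : ∀ m : M, B m 1 = counit m) (x : M ⊗[ℂ] H) :
    (tensorCoopposite ℂ M H).counit (pairingTwist B Si x) =
      (tensorCoopposite ℂ M H).counit x :=
  letI := tensorCoopposite ℂ M H
  counit_rightSlice_leftSlice (pairing_comp_rightSlice h₁ h₂ hmul hone) x

end Coalgebra

variable [Ring M] [Bialgebra ℂ M]

theorem tensorCoopposite_comul_map_mul {ι ι' : Type*} {m : M} {ψ : H}
    (r : Coalgebra.Repr ℂ m ι) (s : Coalgebra.Repr ℂ ψ ι') (x : M ⊗[ℂ] H) :
    (tensorCoopposite ℂ M H).comul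
        (TensorProduct.map (LinearMap.mulLeft ℂ m) (LinearMap.mulRight ℂ ψ) x) =
      ∑ i ∈ r.index, ∑ j ∈ s.index,
        TensorProduct.map
          (TensorProduct.map (LinearMap.mulLeft ℂ (r.left i)) (LinearMap.mulRight ℂ (s.right j)))
          (TensorProduct.map (LinearMap.mulLeft ℂ (r.right i)) (LinearMap.mulRight ℂ (s.left j)))
          ((tensorCoopposite ℂ M H).comul x) := by
  induction x with
  | zero => simp only [map_zero, Finset.sum_const_zero]
  | add x x' hx hx' => simp only [map_add, hx, hx', Finset.sum_add_distrib]
  | tmul n φ =>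
    have hpure (y : M ⊗[ℂ] M) (z : H ⊗[ℂ] H) (i : ι) (j : ι') :
        TensorProduct.tensorTensorTensorComm ℂ M M H H
          (((r.left i ⊗ₜ[ℂ] r.right i) * y) ⊗ₜ[ℂ]
            TensorProduct.comm ℂ H H (z * (s.left j ⊗ₜ[ℂ] s.right j))) =
        TensorProduct.map
          (TensorProduct.map (LinearMap.mulLeft ℂ (r.left i)) (LinearMap.mulRight ℂ (s.right j)))
          (TensorProduct.map (LinearMap.mulLeft ℂ (r.right i)) (LinearMap.mulRight ℂ (s.left j)))
          (TensorProduct.tensorTensorTensorComm ℂ M M H H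
            (y ⊗ₜ[ℂ] TensorProduct.comm ℂ H H z)) := by
      induction y with
      | zero => simp only [mul_zero, zero_tmul, map_zero]
      | add y y' hy hy' => simp only [mul_add, add_tmul, map_add, hy, hy']
      | tmul a b =>
        induction z with
        | zero => simp only [zero_mul, tmul_zero, map_zero]
        | add z z' hz hz' => simp only [add_mul, tmul_add, map_add, hz, hz']
        | tmul c d =>
          simp only [Algebra.TensorProduct.tmul_mul_tmul, TensorProduct.comm_tmul,
            TensorProduct.tensorTensorTensorComm_tmul, TensorProduct.map_tmul,
            LinearMap.mulLeft_apply, LinearMap.mulRight_apply]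
    rw [TensorProduct.map_tmul, LinearMap.mulLeft_apply, LinearMap.mulRight_apply,
      tensorCoopposite_comul_tmul, tensorCoopposite_comul_tmul,
      Bialgebra.comul_mul, Bialgebra.comul_mul, ← r.eq, ← s.eq]
    simp only [← hpure, map_sum, sum_tmul, tmul_sum, Finset.sum_mul, Finset.mul_sum]
    exact Finset.sum_comm

theorem tensorCoopposite_counit_map_mul (m : M) (ψ : H) (x : M ⊗[ℂ] H) :
    (tensorCoopposite ℂ M H).counit
        (TensorProduct.map (LinearMap.mulLeft ℂ m) (LinearMap.mulRight ℂ ψ) x) =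
      counit (R := ℂ) m * (tensorCoopposite ℂ M H).counit x * counit (R := ℂ) ψ := by
  induction x with
  | zero => simp only [map_zero, mul_zero, zero_mul]
  | add x x' hx hx' => simp only [map_add, hx, hx', mul_add, add_mul]
  | tmul n φ =>
    simp only [TensorProduct.map_tmul, tensorCoopposite_counit_tmul, LinearMap.mulLeft_apply,
      LinearMap.mulRight_apply, Bialgebra.counit_mul, mul_assoc]

end PairingTwist

/-- Let `G` be a finite-dimensional Hopf algebra with dual `Ĝ = H` (encoded
by a Hopf pairing `p`), and let `M` be a bialgebra with a commuting pair of `G`-coactions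
`(λ, ρ)` given by `λ = (κ ⊗ id) ∘ Δ_M`, `ρ = (id ⊗ κ) ∘ Δ_M` for a bialgebra map `κ : M → G`.
Then on the diagonal crossed product `B := M ⋈ Ĝ`, the maps
`Δ_B(m ⋈ ψ) := (m⁽¹⁾ ⋈ ψ₍₂₎) ⊗ (m⁽²⁾ ⋈ ψ₍₁₎)` and `ε_B(m ⋈ ψ) := ε_M(m)ε̂(ψ)` are algebra
homomorphisms `Δ_B : B → B ⊗ B` and `ε_B : B → ℂ`. -/
theorem statement12
    (G H M : Type*) [Ring G] [HopfAlgebra ℂ G] [Ring H] [HopfAlgebra ℂ H]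
    [Ring M] [Bialgebra ℂ M]
    [FiniteDimensional ℂ G] [FiniteDimensional ℂ H]
    -- inverse antipode of `Ĝ = H`
    (SiH : H →ₗ[ℂ] H)
    (hSiH1 : ∀ x : H, SiH (HopfAlgebra.antipode (R := ℂ) x) = x)
    (hSiH2 : ∀ x : H, HopfAlgebra.antipode (R := ℂ) (SiH x) = x)
    -- the Hopf pairing `⟨·|·⟩ : G ⊗ Ĝ → ℂ`
    (p : G →ₗ[ℂ] H →ₗ[ℂ] ℂ)
    (hp_mulG : ∀ (a b : G) (φ : H),
      p (a * b) φ =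
        LinearMap.mul' ℂ ℂ (TensorProduct.map (p a) (p b) (Coalgebra.comul (R := ℂ) φ)))
    (hp_oneG : ∀ φ : H, p 1 φ = Coalgebra.counit (R := ℂ) φ)
    (hp_mulH : ∀ (a : G) (φ ψ : H),
      p a (φ * ψ) =
        LinearMap.mul' ℂ ℂ
          (TensorProduct.map (p.flip φ) (p.flip ψ) (Coalgebra.comul (R := ℂ) a)))
    (hp_oneH : ∀ a : G, p a 1 = Coalgebra.counit (R := ℂ) a)
    (hp_antipode : ∀ (a : G) (φ : H),
      p (HopfAlgebra.antipode (R := ℂ) a) φ = p a (HopfAlgebra.antipode (R := ℂ) φ))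
    (hp_nondegG : ∀ a : G, (∀ φ : H, p a φ = 0) → a = 0)
    (hp_nondegH : ∀ φ : H, (∀ a : G, p a φ = 0) → φ = 0)
    -- the bialgebra map `κ : M → G`
    (κ : M →ₗ[ℂ] G)
    (hκ_mul : ∀ m n : M, κ (m * n) = κ m * κ n)
    (hκ_one : κ 1 = 1)
    (hκ_comul : ∀ m : M,
      Coalgebra.comul (R := ℂ) (κ m) =
        TensorProduct.map κ κ (Coalgebra.comul (R := ℂ) m))
    (hκ_counit : ∀ m : M,
      Coalgebra.counit (R := ℂ) (κ m) = (Coalgebra.counit (R := ℂ) m : ℂ))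
    -- the coactions `λ = (κ ⊗ id) ∘ Δ_M` and `ρ = (id ⊗ κ) ∘ Δ_M`
    (lam : M →ₗ[ℂ] G ⊗[ℂ] M)
    (hlam : ∀ m : M,
      lam m = TensorProduct.map κ LinearMap.id (Coalgebra.comul (R := ℂ) m))
    (rho : M →ₗ[ℂ] M ⊗[ℂ] G)
    (hrho : ∀ m : M,
      rho m = TensorProduct.map LinearMap.id κ (Coalgebra.comul (R := ℂ) m))
    -- the dual actions `▷ = actL` (dual to `ρ`) and `◁ = actR` (dual to `λ`) of `Ĝ` on `M`
    (actL : H →ₗ[ℂ] M →ₗ[ℂ] M)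
    (h_actL : ∀ (φ : H) (m : M),
      actL φ m =
        (TensorProduct.rid ℂ M)
          (TensorProduct.map LinearMap.id (p.flip φ) (rho m)))
    (actR : H →ₗ[ℂ] M →ₗ[ℂ] M)
    (h_actR : ∀ (φ : H) (m : M),
      actR φ m =
        (TensorProduct.lid ℂ M)
          (TensorProduct.map (p.flip φ) LinearMap.id (lam m)))
    -- the diagonal crossed product `B = M ⋈ Ĝ`
    (mulMH : M ⊗[ℂ] H →ₗ[ℂ] M ⊗[ℂ] H →ₗ[ℂ] M ⊗[ℂ] H)
    (hmulMH : ∀ (m n : M) (φ ψ : H),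
      mulMH (m ⊗ₜ[ℂ] φ) (n ⊗ₜ[ℂ] ψ) =
        TensorProduct.map
          (LinearMap.mulLeft ℂ m ∘ₗ TensorProduct.lift actL ∘ₗ
            TensorProduct.map LinearMap.id (actR.flip n ∘ₗ SiH))
          (LinearMap.mulRight ℂ ψ) (sweedlerShuffle H φ))
    -- the product on `B ⊗ B`
    (mulBB : (M ⊗[ℂ] H) ⊗[ℂ] (M ⊗[ℂ] H) →ₗ[ℂ]
      (M ⊗[ℂ] H) ⊗[ℂ] (M ⊗[ℂ] H) →ₗ[ℂ] (M ⊗[ℂ] H) ⊗[ℂ] (M ⊗[ℂ] H))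
    (hmulBB : ∀ x y x' y' : M ⊗[ℂ] H,
      mulBB (x ⊗ₜ[ℂ] y) (x' ⊗ₜ[ℂ] y') = (mulMH x x') ⊗ₜ[ℂ] (mulMH y y'))
    -- the coproduct `Δ_B(m ⋈ ψ) = (m⁽¹⁾ ⋈ ψ₍₂₎) ⊗ (m⁽²⁾ ⋈ ψ₍₁₎)`
    (ΔB : M ⊗[ℂ] H →ₗ[ℂ] (M ⊗[ℂ] H) ⊗[ℂ] (M ⊗[ℂ] H))
    (hΔB : ∀ (m : M) (ψ : H),
      ΔB (m ⊗ₜ[ℂ] ψ) =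
        (TensorProduct.tensorTensorTensorComm ℂ M M H H)
          ((Coalgebra.comul (R := ℂ) m) ⊗ₜ[ℂ]
            ((TensorProduct.comm ℂ H H) (Coalgebra.comul (R := ℂ) ψ))))
    -- the counit `ε_B(m ⋈ ψ) = ε_M(m)·ε̂(ψ)`
    (εB : M ⊗[ℂ] H →ₗ[ℂ] ℂ)
    (hεB : ∀ (m : M) (ψ : H),
      εB (m ⊗ₜ[ℂ] ψ) = Coalgebra.counit (R := ℂ) m * Coalgebra.counit (R := ℂ) ψ) :
    -- `Δ_B` is an algebra homomorphism `B → B ⊗ B`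
    (∀ x y : M ⊗[ℂ] H, ΔB (mulMH x y) = mulBB (ΔB x) (ΔB y)) ∧
    ΔB ((1 : M) ⊗ₜ[ℂ] (1 : H)) =
      ((1 : M) ⊗ₜ[ℂ] (1 : H)) ⊗ₜ[ℂ] ((1 : M) ⊗ₜ[ℂ] (1 : H)) ∧
    -- `ε_B` is an algebra homomorphism `B → ℂ`
    (∀ x y : M ⊗[ℂ] H, εB (mulMH x y) = εB x * εB y) ∧
    εB ((1 : M) ⊗ₜ[ℂ] (1 : H)) = 1 := by
  let B : M →ₗ[ℂ] H →ₗ[ℂ] ℂ := p ∘ₗ κ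
  have hBmul (m : M) (φ ψ : H) : B m (φ * ψ) =
      LinearMap.mul' ℂ ℂ (TensorProduct.map (B.flip φ) (B.flip ψ) (comul m)) := by
    change p (κ m) (φ * ψ) = _
    rw [hp_mulH, hκ_comul, TensorProduct.map_map]
    rfl
  have hBone (m : M) : B m 1 = counit (R := ℂ) m := by
    change p (κ m) 1 = _
    rw [hp_oneH, hκ_counit]
  have hactL (φ : H) (m : M) : actL φ m =
      TensorProduct.rid ℂ M (TensorProduct.map LinearMap.id (B.flip φ) (comul m)) := by
    rw [h_actL, hrho, TensorProduct.map_map]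
    rfl
  have hactR (φ : H) (m : M) : actR φ m =
      TensorProduct.lid ℂ M (TensorProduct.map (B.flip φ) LinearMap.id (comul m)) := by
    rw [h_actR, hlam, TensorProduct.map_map]
    rfl
  have hmulT (m n : M) (φ ψ : H) : mulMH (m ⊗ₜ[ℂ] φ) (n ⊗ₜ[ℂ] ψ) =
      TensorProduct.map (LinearMap.mulLeft ℂ m) (LinearMap.mulRight ℂ ψ)
        (pairingTwist B SiH (n ⊗ₜ[ℂ] φ)) := by
    rw [hmulMH, pairingTwist_tmul hactL hactR, TensorProduct.map_map, LinearMap.comp_id]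
  have hΔ : ΔB = (tensorCoopposite ℂ M H).comul :=
    TensorProduct.ext' fun m φ ↦ (hΔB m φ).trans (tensorCoopposite_comul_tmul m φ).symm
  have hε : εB = (tensorCoopposite ℂ M H).counit :=
    TensorProduct.ext' fun m φ ↦ (hεB m φ).trans (tensorCoopposite_counit_tmul m φ).symm
  refine ⟨fun x y ↦ ?_, ?_, fun x y ↦ ?_, ?_⟩
  · induction x with
    | zero => simp only [map_zero, LinearMap.zero_apply]
    | add x x' hx hx' => simp only [map_add, LinearMap.add_apply, hx, hx']
    | tmul m φ =>
    induction y with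
    | zero => simp only [map_zero]
    | add y y' hy hy' => simp only [map_add, hy, hy']
    | tmul n ψ =>
    let rm := Coalgebra.Repr.arbitrary ℂ m
    let rn := Coalgebra.Repr.arbitrary ℂ n
    let sφ := Coalgebra.Repr.arbitrary ℂ φ
    let sψ := Coalgebra.Repr.arbitrary ℂ ψ
    rw [hmulT, hΔ, tensorCoopposite_comul_map_mul rm sψ,
      comul_pairingTwist hSiH1 hSiH2 hBmul hBone, tensorCoopposite_comul_repr rm sφ,
      tensorCoopposite_comul_repr rn sψ, tensorCoopposite_comul_repr rn sφ]
    simp only [map_sum, LinearMap.sum_apply, hmulBB, hmulT, TensorProduct.map_tmul]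
    exact Finset.sum_comm.trans
      ((Finset.sum_congr rfl fun _ _ ↦ Finset.sum_comm).trans Finset.sum_comm)
  · rw [hΔB, Bialgebra.comul_one, Bialgebra.comul_one, Algebra.TensorProduct.one_def,
      Algebra.TensorProduct.one_def, TensorProduct.comm_tmul,
      TensorProduct.tensorTensorTensorComm_tmul]
  · induction x with
    | zero => simp only [map_zero, LinearMap.zero_apply, zero_mul]
    | add x x' hx hx' => simp only [map_add, LinearMap.add_apply, hx, hx', add_mul]
    | tmul m φ =>
    induction y with
    | zero => simp only [map_zero, mul_zero]
    | add y y' hy hy' => simp only [map_add, hy, hy', mul_add]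
    | tmul n ψ =>
    rw [hmulT, hε, tensorCoopposite_counit_map_mul, counit_pairingTwist hSiH1 hSiH2 hBmul hBone]
    simp only [tensorCoopposite_counit_tmul]
    ring
  · rw [hεB, Bialgebra.counit_one, Bialgebra.counit_one, mul_one]
end
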